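/- arXiv:2605.21025 — 7 statements merged into one kernel-verified Lean document; each statement's English description precedes it below -/
import Mathlib

section
/- Factor Permutation Lemma (injection part): Let G be a tower group with index type ι = Σ k : ℕ, Fin (a k), and let 𝒜 = {j : ι // j.1 = 4} and ℬ = {j : ι // j.1 ≠ 4}. Then there exists an injective group homomorphism from LatAut(G) into Equiv.Perm 𝒜 × Equiv.Perm ℬ. -/
/-!
Write the tower group as `P = ∏ i, S_{n i}` over a finite index type, with all `n i ≥ 3`.

*The action on factors.* The normal subgroups of `S_k` form a finite chain (`normal_perm_chain`),
and `S_k` has trivial center. Hence the factors of `P` are exactly the maximal *uniform* elements of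
the normal subgroup lattice, those in which any two nontrivial elements have nontrivial meet
(`exists_le_factor_of_isUniformElt`, `maximal_isUniformElt_factor`). Lattice automorphisms
therefore permute the factors. Below a factor there is a chain of length three if and only if that
factor is `S₄` (`hasLongChain_factor_iff`), so the two classes of indices are preserved.

*Faithfulness.* Let `σ` fix every factor. A finite chain has no nontrivial automorphism, so `σ` fixes
every normal subgroup inside a factor, and hence every product of such subgroups (`apply_box`). It
suffices to show `g ∈ σ ⟪g⟫` for the normal closure `⟪g⟫` of each `g` (`mem_apply_ncl`). Commutators
with the factors show that `⟪g⟫` contains a box `B` with side the normal closure of `g i` where `g i`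
is even and `A_{n i}` where `g i` is odd. Modulo `B`, the group `⟪g⟫` is generated by `g` and is
determined by a sign vector in a power of `ℤˣ`. Since `σ` fixes all boxes, `σ ⟪g⟫` lies between the
same boxes as `⟪g⟫`, is not contained in `B` unless `⟪g⟫` is, and contains no element with a smaller
nonempty odd support; over the field with two elements a vector is determined by its support, so
`σ ⟪g⟫` contains an element congruent to `g` modulo `B`.
-/

/-- The lattice of normal subgroups of `G`, ordered by inclusion. -/
abbrev NormalSubgroupLattice (G : Type*) [Group G] := {N : Subgroup G // N.Normal}

/-- The group of lattice automorphisms of the normal subgroup lattice of `G`. -/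
abbrev LatAut (G : Type*) [Group G] :=
  NormalSubgroupLattice G ≃o NormalSubgroupLattice G

/-- The monoid embedding of `S_k` into the tower group at slot `j = (k, i)`. -/
def towerEmb (a : ℕ → ℕ) (j : Σ k : ℕ, Fin (a k)) :
    Equiv.Perm (Fin j.1) →* Π k : ℕ, Π _i : Fin (a k), Equiv.Perm (Fin k) :=
  (MonoidHom.mulSingle (fun k => Π _i : Fin (a k), Equiv.Perm (Fin k)) j.1).comp
    (MonoidHom.mulSingle (fun _ : Fin (a j.1) => Equiv.Perm (Fin j.1)) j.2)

/-- The factor `F_j = S_k^{(k,i)}` as a subgroup of the tower group. -/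
def towerFactor (a : ℕ → ℕ) (j : Σ k : ℕ, Fin (a k)) :
    Subgroup (Π k : ℕ, Π _i : Fin (a k), Equiv.Perm (Fin k)) :=
  (towerEmb a j).range

namespace TowerLattice

open Equiv Equiv.Perm

/-! ### Order-theoretic notions used to recognize the factors -/

section Order
variable {α : Type*} [PartialOrder α]

/-- An element `N` of an order is uniform if it is not the bottom and any two non-bottom elements
below `N` have a common non-bottom lower bound. -/
def IsUniformElt (N : α) : Prop :=
  ¬ IsBot N ∧ ∀ A ≤ N, ∀ B ≤ N, ¬ IsBot A → ¬ IsBot B → ∃ C ≤ A, C ≤ B ∧ ¬ IsBot C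

theorem isBot_apply_iff (σ : α ≃o α) (N : α) : IsBot (σ N) ↔ IsBot N :=
  ⟨fun h x => by simpa using h (σ x), fun h x => by
    have := h (σ.symm x); rwa [σ.le_symm_apply] at this⟩

theorem IsUniformElt.apply (σ : α ≃o α) {N : α} (h : IsUniformElt N) : IsUniformElt (σ N) := by
  refine ⟨by rw [isBot_apply_iff]; exact h.1, fun A hA B hB hA' hB' => ?_⟩
  obtain ⟨C, h1, h2, h3⟩ := h.2 (σ.symm A) (by rwa [σ.symm_apply_le]) (σ.symm B)
    (by rwa [σ.symm_apply_le]) (by rwa [isBot_apply_iff σ.symm]) (by rwa [isBot_apply_iff σ.symm])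
  exact ⟨σ C, by rwa [← σ.le_symm_apply], by rwa [← σ.le_symm_apply], by rwa [isBot_apply_iff]⟩

theorem maximal_isUniformElt_apply (σ : α ≃o α) {N : α} (h : Maximal IsUniformElt N) :
    Maximal IsUniformElt (σ N) := by
  refine ⟨h.1.apply σ, fun M hM hle => ?_⟩
  have := h.2 (hM.apply σ.symm) (by rwa [σ.le_symm_apply])
  rwa [σ.symm_apply_le] at this

theorem maximal_isUniformElt_apply_iff (σ : α ≃o α) (N : α) :
    Maximal IsUniformElt N ↔ Maximal IsUniformElt (σ N) :=
  ⟨maximal_isUniformElt_apply σ, fun h => by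
    simpa using maximal_isUniformElt_apply σ.symm h⟩

/-- An order automorphism fixing `F` fixes everything below `F`, provided that the elements below `F`
form a well-founded chain. -/
theorem fixes_of_chain [WellFoundedLT α] (σ : α ≃o α) {F : α} (hF : σ F = F)
    (hc : ∀ A ≤ F, ∀ B ≤ F, A ≤ B ∨ B ≤ A) (N : α) (hN : N ≤ F) : σ N = N := by
  induction N using WellFoundedLT.induction with
  | ind N ih =>
    have h1 : σ N ≤ F := by rw [← hF]; exact σ.monotone hN
    by_contra hne
    rcases hc _ h1 _ hN with h | h
    · have h2 := ih _ (lt_of_le_of_ne h hne) h1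
      exact hne (σ.injective h2)
    · have h3 : σ.symm N ≤ N := by rwa [σ.symm_apply_le]
      have h4 : σ.symm N ≠ N := fun h5 => hne (σ.symm_apply_eq.1 h5).symm
      have h5 := ih _ (lt_of_le_of_ne h3 h4) (h3.trans hN)
      rw [σ.apply_symm_apply] at h5
      exact h4 h5.symm

/-- There is a strict chain of length three ending at `F`. Below a factor `S_k` with `k ≥ 3` this
happens exactly when `k = 4`, because of the chain `⊥ < V₄ < A₄ < S₄`. -/
def HasLongChain (F : α) : Prop := ∃ A B C : α, A < B ∧ B < C ∧ C < F

theorem HasLongChain.apply (σ : α ≃o α) {F : α} (h : HasLongChain F) : HasLongChain (σ F) := by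
  obtain ⟨A, B, C, h1, h2, h3⟩ := h
  exact ⟨σ A, σ B, σ C, by simpa, by simpa, by simpa⟩

theorem hasLongChain_apply_iff (σ : α ≃o α) (F : α) : HasLongChain (σ F) ↔ HasLongChain F :=
  ⟨fun h => by simpa using h.apply σ.symm, fun h => h.apply σ⟩

end Order

/-! ### Normal subgroups of a direct product -/

section Product
variable {ι : Type*} {H : ι → Type*} [∀ i, Group (H i)]

/-- The product `∏ i, D i` of normal subgroups of the factors, as a normal subgroup. -/
def box (D : ∀ i, NormalSubgroupLattice (H i)) : NormalSubgroupLattice (∀ i, H i) :=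
  ⟨Subgroup.pi Set.univ fun i => (D i).1, ⟨fun _ hx _ i hi =>
    (D i).2.conj_mem _ (hx i hi) _⟩⟩

theorem mem_box {D : ∀ i, NormalSubgroupLattice (H i)} {x : ∀ i, H i} :
    x ∈ (box D).1 ↔ ∀ i, x i ∈ (D i).1 := by
  simp [box, Subgroup.mem_pi]

variable [DecidableEq ι]

theorem conj_mulSingle (j : ι) (g : ∀ i, H i) (x : H j) :
    g * Pi.mulSingle j x * g⁻¹ = Pi.mulSingle j (g j * x * (g j)⁻¹) := by
  ext i
  by_cases h : i = j
  · subst h; simp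
  · simp [h]

/-- The copy in the `j`-th factor of a normal subgroup `D` of `H j`. -/
def single (j : ι) (D : NormalSubgroupLattice (H j)) : NormalSubgroupLattice (∀ i, H i) :=
  ⟨D.1.map (MonoidHom.mulSingle H j), ⟨by
    rintro _ ⟨x, hx, rfl⟩ g
    exact ⟨g j * x * (g j)⁻¹, D.2.conj_mem x hx _, (conj_mulSingle j g x).symm⟩⟩⟩

/-- The `j`-th factor of the product, as an element of the normal subgroup lattice. -/
def factor (H : ι → Type*) [∀ i, Group (H i)] (j : ι) : NormalSubgroupLattice (∀ i, H i) :=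
  single j ⟨⊤, inferInstance⟩

/-- The intersection of `N` with the `j`-th factor, as a normal subgroup of `H j`. -/
def restrict (j : ι) (N : NormalSubgroupLattice (∀ i, H i)) : NormalSubgroupLattice (H j) :=
  ⟨N.1.comap (MonoidHom.mulSingle H j), ⟨fun x hx g => by
    have := N.2.conj_mem _ hx (Pi.mulSingle j g)
    rw [MonoidHom.mulSingle_apply, conj_mulSingle, Pi.mulSingle_eq_same] at this
    exact this⟩⟩

theorem single_le_iff {j : ι} {D : NormalSubgroupLattice (H j)}
    {N : NormalSubgroupLattice (∀ i, H i)} :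
    single j D ≤ N ↔ ∀ x ∈ D.1, (Pi.mulSingle j x : ∀ i, H i) ∈ N.1 := by
  constructor
  · exact fun h x hx => h ⟨x, hx, rfl⟩
  · rintro h _ ⟨x, hx, rfl⟩
    exact h x hx

theorem single_le_single {j : ι} {D D' : NormalSubgroupLattice (H j)} :
    single j D ≤ single j D' ↔ D ≤ D' :=
  Subgroup.map_le_map_iff_of_injective (Pi.mulSingle_injective j)

theorem single_lt_single {j : ι} {D D' : NormalSubgroupLattice (H j)} :
    single j D < single j D' ↔ D < D' := by
  rw [lt_iff_le_not_ge, lt_iff_le_not_ge, single_le_single, single_le_single]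

theorem mem_factor {j : ι} {x : ∀ i, H i} : x ∈ (factor H j).1 ↔ ∀ i ≠ j, x i = 1 := by
  constructor
  · rintro ⟨y, -, rfl⟩ i hi
    simp [hi]
  · intro h
    refine ⟨x j, trivial, ?_⟩
    ext i
    by_cases hi : i = j
    · subst hi; simp
    · simp [hi, h i hi]

theorem eq_single_of_le_factor {j : ι} {N : NormalSubgroupLattice (∀ i, H i)}
    (h : N ≤ factor H j) : N = single j (restrict j N) := by
  apply le_antisymm
  · intro x hx
    have hx' := mem_factor.1 (h hx)
    have : x = Pi.mulSingle j (x j) := by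
      ext i
      by_cases hi : i = j
      · subst hi; simp
      · simp [hi, hx' i hi]
    refine ⟨x j, ?_, this.symm⟩
    show Pi.mulSingle j (x j) ∈ N.1
    rwa [← this]
  · exact single_le_iff.2 fun x hx => hx

theorem restrict_lt_restrict {j : ι} {A B : NormalSubgroupLattice (∀ i, H i)} (h : A < B)
    (hB : B ≤ factor H j) : restrict j A < restrict j B := by
  rwa [← single_lt_single, ← eq_single_of_le_factor hB,
    ← eq_single_of_le_factor (h.le.trans hB)]

theorem single_le_factor (j : ι) (D : NormalSubgroupLattice (H j)) : single j D ≤ factor H j :=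
  single_le_single.2 (show D.1 ≤ ⊤ from le_top)

theorem box_le_iff [Finite ι] {D : ∀ i, NormalSubgroupLattice (H i)}
    {N : NormalSubgroupLattice (∀ i, H i)} : box D ≤ N ↔ ∀ j, single j (D j) ≤ N :=
  Subgroup.pi_le_iff

/-- Commutators of `g ∈ N` with elements of the `j`-th factor lie in `N`, and depend only on the
component `g j`; this is how `N` is seen to have large intersection with that factor. -/
theorem commutator_mem {N : NormalSubgroupLattice (∀ i, H i)} {g : ∀ i, H i} (hg : g ∈ N.1)
    (j : ι) (y : H j) : (Pi.mulSingle j (g j * y * (g j)⁻¹ * y⁻¹) : ∀ i, H i) ∈ N.1 := by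
  have h1 := N.1.mul_mem hg (N.2.conj_mem _ (N.1.inv_mem hg) (Pi.mulSingle j y))
  convert h1 using 1
  have h2 := conj_mulSingle j g y
  rw [Pi.mulSingle_mul, ← h2, Pi.mulSingle_inv]
  group

theorem isBot_iff {G : Type*} [Group G] (N : NormalSubgroupLattice G) : IsBot N ↔ N.1 = ⊥ :=
  ⟨fun h => le_bot_iff.1 (h ⟨⊥, inferInstance⟩), fun h M => by
    show N.1 ≤ M.1
    rw [h]; exact bot_le⟩

theorem exists_ne_one {G : Type*} [Group G] {N : NormalSubgroupLattice G} (h : ¬ IsBot N) :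
    ∃ x ∈ N.1, x ≠ 1 := by
  rw [isBot_iff, Subgroup.eq_bot_iff_forall] at h
  simpa using h

theorem not_isBot_of_mem {G : Type*} [Group G] {N : NormalSubgroupLattice G} {x : G} (h : x ∈ N.1)
    (hx : x ≠ 1) : ¬ IsBot N := by
  rw [isBot_iff]
  intro h'
  rw [h'] at h
  exact hx (Subgroup.mem_bot.1 h)

theorem chain_factor (hchain : ∀ i, ∀ N M : NormalSubgroupLattice (H i), N ≤ M ∨ M ≤ N) (j : ι) :
    ∀ A ≤ factor H j, ∀ B ≤ factor H j, A ≤ B ∨ B ≤ A := by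
  intro A hA B hB
  rw [eq_single_of_le_factor hA, eq_single_of_le_factor hB, single_le_single, single_le_single]
  exact hchain j _ _

theorem not_isBot_factor [∀ i, Nontrivial (H i)] (j : ι) : ¬ IsBot (factor H j) := by
  obtain ⟨x, hx⟩ := exists_ne (1 : H j)
  exact not_isBot_of_mem (x := Pi.mulSingle j x) ⟨x, trivial, rfl⟩ (by simpa using hx)

theorem isUniformElt_factor [∀ i, Nontrivial (H i)]
    (hchain : ∀ i, ∀ N M : NormalSubgroupLattice (H i), N ≤ M ∨ M ≤ N)
    (j : ι) : IsUniformElt (factor H j) := by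
  refine ⟨not_isBot_factor j, fun A hA B hB hA' hB' => ?_⟩
  rcases chain_factor hchain j A hA B hB with h | h
  · exact ⟨A, le_rfl, h, hA'⟩
  · exact ⟨B, h, le_rfl, hB'⟩

/-- For centerless `H i`, a uniform normal subgroup lies in a single factor: two nontrivial
components would give it nontrivial subgroups in two different factors, which meet trivially. -/
theorem exists_le_factor_of_isUniformElt
    (hcenter : ∀ i, ∀ x : H i, (∀ y, x * y * x⁻¹ * y⁻¹ = 1) → x = 1)
    {N : NormalSubgroupLattice (∀ i, H i)} (hN : IsUniformElt N) : ∃ j, N ≤ factor H j := by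
  -- `N` contains a nontrivial subgroup of each factor in which it has a nontrivial component.
  have key : ∀ g ∈ N.1, ∀ j, g j ≠ 1 → ¬ IsBot (single j (restrict j N)) := by
    intro g hg j hj
    have : ∃ y, g j * y * (g j)⁻¹ * y⁻¹ ≠ 1 := by
      by_contra! h
      exact hj (hcenter j _ h)
    obtain ⟨y, hy⟩ := this
    exact not_isBot_of_mem (x := Pi.mulSingle j _) ⟨_, commutator_mem hg j y, rfl⟩ (by simpa using hy)
  have hle : ∀ j, single j (restrict j N) ≤ N := fun j => single_le_iff.2 fun x hx => hx
  obtain ⟨g, hg, hg1⟩ := exists_ne_one hN.1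
  obtain ⟨j, hj⟩ := Function.ne_iff.1 hg1
  refine ⟨j, fun h hh => mem_factor.2 fun i hi => ?_⟩
  by_contra hne
  obtain ⟨C, h1, h2, h3⟩ := hN.2 _ (hle j) _ (hle i) (key g hg j hj) (key h hh i hne)
  obtain ⟨c, hc, hc1⟩ := exists_ne_one h3
  apply hc1
  have h4 := mem_factor.1 (single_le_factor _ _ (h1 hc))
  have h5 := mem_factor.1 (single_le_factor _ _ (h2 hc))
  ext k
  by_cases hk : k = j
  · exact h5 k (by rw [hk]; exact hi.symm)
  · exact h4 k hk

theorem factor_le_factor [∀ i, Nontrivial (H i)] {i j : ι} (h : factor H i ≤ factor H j) :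
    i = j := by
  by_contra hne
  obtain ⟨x, hx⟩ := exists_ne (1 : H i)
  have h1 : (Pi.mulSingle i x : ∀ i, H i) ∈ (factor H j).1 := h ⟨x, trivial, rfl⟩
  have := mem_factor.1 h1 i hne
  simp at this
  exact hx this

theorem maximal_isUniformElt_factor [∀ i, Nontrivial (H i)]
    (hchain : ∀ i, ∀ N M : NormalSubgroupLattice (H i), N ≤ M ∨ M ≤ N)
    (hcenter : ∀ i, ∀ x : H i, (∀ y, x * y * x⁻¹ * y⁻¹ = 1) → x = 1) (j : ι) :
    Maximal IsUniformElt (factor H j) := by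
  refine ⟨isUniformElt_factor hchain j, fun M hM hle => ?_⟩
  obtain ⟨i, hi⟩ := exists_le_factor_of_isUniformElt hcenter hM
  rwa [factor_le_factor (hle.trans hi)]

theorem exists_eq_factor [∀ i, Nontrivial (H i)]
    (hchain : ∀ i, ∀ N M : NormalSubgroupLattice (H i), N ≤ M ∨ M ≤ N)
    (hcenter : ∀ i, ∀ x : H i, (∀ y, x * y * x⁻¹ * y⁻¹ = 1) → x = 1)
    {N : NormalSubgroupLattice (∀ i, H i)} (hN : Maximal IsUniformElt N) :
    ∃ j, factor H j = N := by
  obtain ⟨j, hj⟩ := exists_le_factor_of_isUniformElt hcenter hN.1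
  exact ⟨j, le_antisymm (hN.2 (isUniformElt_factor hchain j) hj) hj⟩

/-- Boxes are joins of subgroups of the factors, so they are fixed along with those. -/
theorem apply_box [Finite ι] (σ : LatAut (∀ i, H i))
    (hσ : ∀ j, ∀ N ≤ factor H j, σ N = N)
    (D : ∀ i, NormalSubgroupLattice (H i)) : σ (box D) = box D := by
  have h : ∀ N, σ (box D) ≤ N ↔ box D ≤ N := by
    intro N
    rw [← σ.le_symm_apply, box_le_iff, box_le_iff]
    refine forall_congr' fun j => ?_
    rw [σ.le_symm_apply, hσ j _ (single_le_factor j _)]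
  exact le_antisymm ((h _).2 le_rfl) ((h _).1 le_rfl)

/-! ### Automorphisms fixing every factor -/

/-- The normal closure of one element. -/
def ncl {G : Type*} [Group G] (g : G) : NormalSubgroupLattice G :=
  ⟨Subgroup.normalClosure {g}, inferInstance⟩

theorem mem_ncl {G : Type*} [Group G] (g : G) : g ∈ (ncl g).1 :=
  Subgroup.subset_normalClosure rfl

theorem ncl_le {G : Type*} [Group G] {g : G} {N : NormalSubgroupLattice G} :
    ncl g ≤ N ↔ g ∈ N.1 := by
  have := N.2
  constructor
  · exact fun h => h (mem_ncl g)
  · exact fun h => Subgroup.normalClosure_le_normal (by simpa using h)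

open Classical in
/-- The box whose `i`-th side is the normal closure of `g i` if `g i` is even, and otherwise the
whole of `H i` or the kernel of the sign according to whether `i ∈ T`. With `T = Set.univ` it
contains `g`; with `T = ∅` it lies below the normal closure of `g` under the commutator hypotheses
of `mem_apply_ncl`. -/
noncomputable def signBox (s : ∀ i, H i →* ℤˣ) (g : ∀ i, H i) (T : Set ι) :
    ∀ i, NormalSubgroupLattice (H i) := fun i =>
  if s i (g i) = 1 then ncl (g i) else if i ∈ T then ⟨⊤, inferInstance⟩
    else ⟨(s i).ker, inferInstance⟩

variable {s : ∀ i, H i →* ℤˣ}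

/-- The elements of the product whose components at all indices in `U` have the same sign. -/
def signAgree (s : ∀ i, H i →* ℤˣ) (U : Set ι) : NormalSubgroupLattice (∀ i, H i) :=
  ⟨{ carrier := {x | ∀ i ∈ U, ∀ j ∈ U, s i (x i) = s j (x j)}
     mul_mem' := fun {x y} hx hy i hi j hj => by simp [hx i hi j hj, hy i hi j hj]
     one_mem' := fun i _ j _ => by simp
     inv_mem' := fun {x} hx i hi j hj => by simp [hx i hi j hj] },
   ⟨fun x hx g i hi j hj => by
    have := hx i hi j hj
    simpa only [Pi.mul_apply, Pi.inv_apply, map_mul, map_inv, mul_inv_cancel_comm] using this⟩⟩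

theorem units_eq {u v : ℤˣ} (hu : u ≠ 1) (hv : v ≠ 1) : u = v := by
  rw [Int.units_ne_iff_eq_neg] at hu hv
  rw [hu, hv]

/-- An automorphism `σ` fixing everything inside the factors sends the normal closure of `g` to a
subgroup containing `g`. Here `heven` and `hodd` say that the commutators of `x : H i` with `H i`
normally generate a subgroup containing `x` if `x` is even, and all even elements if `x` is odd. -/
theorem mem_apply_ncl [Finite ι] (σ : LatAut (∀ i, H i))
    (hσ : ∀ j, ∀ N ≤ factor H j, σ N = N)
    (heven : ∀ i, ∀ x : H i, s i x = 1 → ∀ N : NormalSubgroupLattice (H i),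
      (∀ y, x * y * x⁻¹ * y⁻¹ ∈ N.1) → x ∈ N.1)
    (hodd : ∀ i, ∀ x : H i, s i x ≠ 1 → ∀ N : NormalSubgroupLattice (H i),
      (∀ y, x * y * x⁻¹ * y⁻¹ ∈ N.1) → (s i).ker ≤ N.1)
    (g : ∀ i, H i) : g ∈ (σ (ncl g)).1 := by
  have hb := fun T => apply_box σ hσ (signBox s g T)
  have hlow : box (signBox s g ∅) ≤ ncl g := by
    rw [box_le_iff]
    intro j
    rw [single_le_iff]
    have hc : ∀ y, g j * y * (g j)⁻¹ * y⁻¹ ∈ (restrict j (ncl g)).1 :=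
      fun y => commutator_mem (mem_ncl g) j y
    have : (signBox s g ∅ j) ≤ restrict j (ncl g) := by
      unfold signBox
      split_ifs with h1 h2
      · exact ncl_le.2 (heven j _ h1 _ hc)
      · exact absurd h2 (by simp)
      · exact hodd j _ h1 _ hc
    exact fun x hx => this hx
  have hlow' : box (signBox s g ∅) ≤ σ (ncl g) := by
    rw [← hb ∅]; exact σ.monotone hlow
  have hhigh : ncl g ≤ box (signBox s g Set.univ) := by
    rw [ncl_le, mem_box]
    intro i
    unfold signBox
    split_ifs with h1 h2
    · exact mem_ncl _
    · trivial
    · exact absurd trivial h2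
  have hhigh' : σ (ncl g) ≤ box (signBox s g Set.univ) := by
    rw [← hb Set.univ]; exact σ.monotone hhigh
  -- If all components of `g` are even, the lower box already contains `g`.
  by_cases hcase : ncl g ≤ box (signBox s g ∅)
  · exact hlow' (ncl_le.1 hcase)
  have hcase' : ¬ (σ (ncl g)).1 ≤ (box (signBox s g ∅)).1 := by
    intro hle
    have : σ (ncl g) ≤ σ (box (signBox s g ∅)) := by rw [hb ∅]; exact hle
    exact hcase (σ.le_iff_le.1 this)
  obtain ⟨h, hh, hh'⟩ := SetLike.not_le_iff_exists.1 hcase'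
  -- `h ∈ σ (ncl g)` is odd exactly on the nonempty subset `T` of the odd support of `g`.
  set T : Set ι := {i | h i ∉ (signBox s g ∅ i).1} with hT
  have hsgn : ∀ i, s i (g i) = 1 → h i ∈ (ncl (g i)).1 := by
    intro i hi
    have := mem_box.1 (hhigh' hh) i
    simpa [signBox, hi] using this
  have hTiff : ∀ i, i ∈ T ↔ s i (g i) ≠ 1 ∧ s i (h i) ≠ 1 := by
    intro i
    by_cases hi : s i (g i) = 1
    · simp [hT, signBox, hi, hsgn i hi]
    · simp [hT, signBox, hi, MonoidHom.mem_ker]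
  by_cases hU : ∀ i, s i (g i) ≠ 1 → i ∈ T
  -- Same odd support: `h` and `g` differ by an element of the lower box.
  · have h1 : h⁻¹ * g ∈ (box (signBox s g ∅)).1 := by
      rw [mem_box]
      intro i
      by_cases hi : s i (g i) = 1
      · have h2 : h⁻¹ i * g i ∈ (ncl (g i)).1 :=
          mul_mem (inv_mem (hsgn i hi)) (mem_ncl _)
        simpa [signBox, hi] using h2
      · have h3 := ((hTiff i).1 (hU i hi)).2
        have h4 : s i ((h⁻¹ * g) i) = 1 := by simp [units_eq hi h3]
        simpa only [signBox, if_neg hi, if_neg (Set.notMem_empty i), MonoidHom.mem_ker] using h4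
    have h2 := mul_mem hh (hlow' h1)
    rwa [mul_inv_cancel_left] at h2
  -- Otherwise the preimage of `ncl h` lies in `ncl g`, whose elements are odd either on all of the
  -- odd support of `g` or nowhere on it, and in the box for `T`, where the sign at `i` is trivial.
  · exfalso
    push Not at hU
    obtain ⟨i, hi, hiT⟩ := hU
    have h1 : σ.symm (ncl h) ≤ ncl g := by rw [σ.symm_apply_le]; exact ncl_le.2 hh
    have h2 : σ.symm (ncl h) ≤ box (signBox s g T) := by
      rw [σ.symm_apply_le, hb, ncl_le, mem_box]
      intro k
      by_cases hk : s k (g k) = 1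
      · simpa [signBox, hk] using hsgn k hk
      · by_cases hkT : k ∈ T
        · simp [signBox, hk, hkT]
        · have h3 := mt (hTiff k).2 hkT
          simp only [not_and, not_not] at h3
          simpa [signBox, hk, hkT, MonoidHom.mem_ker] using h3 hk
    have h3 : σ.symm (ncl h) ≤ box (signBox s g ∅) := by
      intro x hx
      have hx1 : x ∈ (signAgree s {i | s i (g i) ≠ 1}).1 :=
        by
        refine ncl_le.2 ?_ (h1 hx)
        exact fun i hi j hj => units_eq hi hj
      have hx2 := mem_box.1 (h2 hx)
      have hxi : s i (x i) = 1 := by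
        have := hx2 i
        simpa [signBox, hi, hiT, MonoidHom.mem_ker] using this
      rw [mem_box]
      intro k
      by_cases hk : s k (g k) = 1
      · simpa [signBox, hk] using hx2 k
      · have h5 := hx1 k hk i hi
        rw [hxi] at h5
        simpa [signBox, hk, MonoidHom.mem_ker] using h5
    rw [σ.symm_apply_le, hb, ncl_le] at h3
    exact hh' h3

/-- Every normal subgroup is the union of the normal closures of its elements, so `mem_apply_ncl`,
used for `σ` and for its inverse, determines `σ`. -/
theorem eq_one_of_fixes [Finite ι] [∀ i, Finite (H i)] (σ : LatAut (∀ i, H i))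
    (hchain : ∀ i, ∀ N M : NormalSubgroupLattice (H i), N ≤ M ∨ M ≤ N)
    (heven : ∀ i, ∀ x : H i, s i x = 1 → ∀ N : NormalSubgroupLattice (H i),
      (∀ y, x * y * x⁻¹ * y⁻¹ ∈ N.1) → x ∈ N.1)
    (hodd : ∀ i, ∀ x : H i, s i x ≠ 1 → ∀ N : NormalSubgroupLattice (H i),
      (∀ y, x * y * x⁻¹ * y⁻¹ ∈ N.1) → (s i).ker ≤ N.1)
    (hF : ∀ j, σ (factor H j) = factor H j) : σ = 1 := by
  have : WellFoundedLT (NormalSubgroupLattice (∀ i, H i)) := Finite.to_wellFoundedLT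
  have up : ∀ τ : LatAut (∀ i, H i), (∀ j, τ (factor H j) = factor H j) → ∀ N, N ≤ τ N := by
    intro τ hτ N g hg
    have h1 := mem_apply_ncl (s := s) τ
      (fun j => fixes_of_chain τ (hτ j) (chain_factor hchain j)) heven hodd g
    exact τ.monotone (ncl_le.2 hg) h1
  refine DFunLike.ext _ _ fun N => ?_
  refine le_antisymm ?_ (up σ hF N)
  have h2 := up σ.symm (fun j => by rw [σ.symm_apply_eq, hF]) N
  rwa [σ.le_symm_apply] at h2

end Product

/-! ### Normal subgroups of a symmetric group -/

section Perm

instance : DecidablePred fun x : Perm (Fin 4) => sign x = 1 ∧ x * x = 1 :=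
  fun _ => inferInstanceAs (Decidable (_ ∧ _))

set_option maxRecDepth 100000 in
/-- The normal Klein four-group of `S₄`: the even permutations of square one. -/
def klein : NormalSubgroupLattice (Perm (Fin 4)) :=
  ⟨{ carrier := {x | sign x = 1 ∧ x * x = 1}
     mul_mem' := by
      have : ∀ x y : Perm (Fin 4), sign x = 1 ∧ x * x = 1 → sign y = 1 ∧ y * y = 1 →
        sign (x * y) = 1 ∧ x * y * (x * y) = 1 := by decide
      exact fun {x y} hx hy => this x y hx hy
     one_mem' := by simp
     inv_mem' := fun {x} hx => ⟨by simp [hx.1], by rw [← mul_inv_rev, hx.2, inv_one]⟩ },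
   ⟨fun x hx g => ⟨by simp [hx.1], by
    have : g * x * g⁻¹ * (g * x * g⁻¹) = g * (x * x) * g⁻¹ := by group
    rw [this, hx.2]; simp⟩⟩⟩

theorem mem_klein {x : Perm (Fin 4)} : x ∈ klein.1 ↔ sign x = 1 ∧ x * x = 1 := Iff.rfl

instance : DecidablePred (· ∈ klein.1) := fun _ => decidable_of_iff' _ mem_klein

theorem conj_mul_mem {G : Type*} [Group G] (N : NormalSubgroupLattice G) {x : G} (hx : x ∈ N.1)
    (c : G) : c * x * c⁻¹ * x ∈ N.1 :=
  mul_mem (N.2.conj_mem x hx c) hx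

theorem normal_perm_three (N : NormalSubgroupLattice (Perm (Fin 3))) :
    N.1 = ⊥ ∨ alternatingGroup (Fin 3) ≤ N.1 := by
  have h1 : ∀ x : Perm (Fin 3), x ≠ 1 →
    ∃ c, c * x * c⁻¹ * x ≠ 1 ∧ sign (c * x * c⁻¹ * x) = 1 := by decide
  have h2 : ∀ x y : Perm (Fin 3), x ≠ 1 → sign x = 1 → y ≠ 1 → sign y = 1 →
    ∃ c, c * x * c⁻¹ = y := by decide
  rw [or_iff_not_imp_left, Subgroup.eq_bot_iff_forall]
  intro h y hy
  push Not at h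
  obtain ⟨x, hx, hx1⟩ := h
  by_cases hy1 : y = 1
  · rw [hy1]; exact N.1.one_mem
  obtain ⟨c, hc1, hc2⟩ := h1 x hx1
  obtain ⟨d, rfl⟩ := h2 _ y hc1 hc2 hy1 (mem_alternatingGroup.1 hy)
  exact N.2.conj_mem _ (conj_mul_mem N hx c) d

set_option maxRecDepth 100000 in
theorem klein_le {N : NormalSubgroupLattice (Perm (Fin 4))} (h : N.1 ≠ ⊥) : klein ≤ N := by
  have h1 : ∀ x : Perm (Fin 4), x ≠ 1 →
    ∃ c, c * x * c⁻¹ * x ≠ 1 ∧ c * x * c⁻¹ * x ∈ klein.1 := by decide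
  have h2 : ∀ x y : Perm (Fin 4), x ≠ 1 → x ∈ klein.1 → y ≠ 1 → y ∈ klein.1 →
    ∃ c, c * x * c⁻¹ = y := by decide
  rw [Ne, Subgroup.eq_bot_iff_forall] at h
  push Not at h
  obtain ⟨x, hx, hx1⟩ := h
  intro y hy
  by_cases hy1 : y = 1
  · rw [hy1]; exact N.1.one_mem
  obtain ⟨c, hc1, hc2⟩ := h1 x hx1
  obtain ⟨d, rfl⟩ := h2 _ y hc1 hc2 hy1 hy
  exact N.2.conj_mem _ (conj_mul_mem N hx c) d

set_option maxRecDepth 100000 in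
theorem alternatingGroup_le_of_not_le_klein {N : NormalSubgroupLattice (Perm (Fin 4))}
    (h : ¬ N.1 ≤ klein.1) : alternatingGroup (Fin 4) ≤ N.1 := by
  have h1 : ∀ x : Perm (Fin 4), x ∉ klein.1 →
    ∃ c, c * x * c⁻¹ * x ∉ klein.1 ∧ sign (c * x * c⁻¹ * x) = 1 := by decide
  have h2 : ∀ x y : Perm (Fin 4), x ∉ klein.1 → sign x = 1 → y ∉ klein.1 → sign y = 1 →
    ∃ c, c * x * c⁻¹ = y := by decide
  obtain ⟨x, hx, hx1⟩ := SetLike.not_le_iff_exists.1 h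
  intro y hy
  by_cases hy1 : y ∈ klein.1
  · refine klein_le ?_ hy1
    rintro h0
    rw [h0] at h
    exact h bot_le
  obtain ⟨c, hc1, hc2⟩ := h1 x hx1
  obtain ⟨d, rfl⟩ := h2 _ y hc1 hc2 hy1 (mem_alternatingGroup.1 hy)
  exact N.2.conj_mem _ (conj_mul_mem N hx c) d

theorem normal_perm_four (N : NormalSubgroupLattice (Perm (Fin 4))) :
    N.1 = ⊥ ∨ N.1 = klein.1 ∨ alternatingGroup (Fin 4) ≤ N.1 := by
  by_cases h : N.1 = ⊥
  · exact Or.inl h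
  by_cases h' : N.1 ≤ klein.1
  · exact Or.inr (Or.inl (le_antisymm h' (klein_le h)))
  · exact Or.inr (Or.inr (alternatingGroup_le_of_not_le_klein h'))

theorem normal_perm_of_ne_four {k : ℕ} (hk : 3 ≤ k) (hk4 : k ≠ 4)
    (N : NormalSubgroupLattice (Perm (Fin k))) :
    N.1 = ⊥ ∨ alternatingGroup (Fin k) ≤ N.1 := by
  obtain rfl | h5 : k = 3 ∨ 5 ≤ k := by omega
  · exact normal_perm_three N
  · have := N.2
    by_cases h : N.1 = ⊥
    · exact Or.inl h
    · exact Or.inr (alternatingGroup_le_of_normal (by simpa using h5)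
        ((Subgroup.nontrivial_iff_ne_bot _).2 h))

theorem eq_alternatingGroup_or_top {k : ℕ} {N : Subgroup (Perm (Fin k))}
    (h : alternatingGroup (Fin k) ≤ N) : N = alternatingGroup (Fin k) ∨ N = ⊤ := by
  by_cases h' : N ≤ alternatingGroup (Fin k)
  · exact Or.inl (le_antisymm h' h)
  · right
    obtain ⟨x, hx, hx1⟩ := SetLike.not_le_iff_exists.1 h'
    rw [mem_alternatingGroup] at hx1
    rw [eq_top_iff]
    intro y _
    by_cases hy : sign y = 1
    · exact h (mem_alternatingGroup.2 hy)
    · have h1 : x⁻¹ * y ∈ N := h (mem_alternatingGroup.2 (by simp [units_eq hx1 hy]))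
      simpa using mul_mem hx h1

theorem klein_le_alternatingGroup : klein.1 ≤ alternatingGroup (Fin 4) :=
  fun _ hx => mem_alternatingGroup.2 hx.1

theorem normal_perm_chain {k : ℕ} (hk : 3 ≤ k) (N M : NormalSubgroupLattice (Perm (Fin k))) :
    N ≤ M ∨ M ≤ N := by
  show N.1 ≤ M.1 ∨ M.1 ≤ N.1
  have key : alternatingGroup (Fin k) ≤ N.1 → alternatingGroup (Fin k) ≤ M.1 →
      N.1 ≤ M.1 ∨ M.1 ≤ N.1 := by
    intro h1 h2
    rcases eq_alternatingGroup_or_top h1 with h | h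
    · left; rwa [h]
    · right; rw [h]; exact le_top
  by_cases h4 : k = 4
  · subst h4
    rcases normal_perm_four N with h | h | h
    · left; rw [h]; exact bot_le
    · rcases normal_perm_four M with h' | h' | h'
      · right; rw [h']; exact bot_le
      · left; rw [h, h']
      · left; rw [h]; exact klein_le_alternatingGroup.trans h'
    · rcases normal_perm_four M with h' | h' | h'
      · right; rw [h']; exact bot_le
      · right; rw [h']; exact klein_le_alternatingGroup.trans h
      · exact key h h'
  · rcases normal_perm_of_ne_four hk h4 N with h | h
    · left; rw [h]; exact bot_le
    · rcases normal_perm_of_ne_four hk h4 M with h' | h'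
      · right; rw [h']; exact bot_le
      · exact key h h'

/-- The center of `S_k` is trivial: if `x` moves `i`, pick `j` outside `{i, x i}`; then `x` does not
commute with the transposition of `x i` and `j`. -/
theorem perm_eq_one {k : ℕ} (hk : 3 ≤ k) (x : Perm (Fin k))
    (h : ∀ y, x * y * x⁻¹ * y⁻¹ = 1) : x = 1 := by
  by_contra hx
  obtain ⟨i, hi⟩ := Function.ne_iff.1 (fun h => hx (Equiv.ext (congrFun h)) : (x : Fin k → Fin k) ≠ id)
  obtain ⟨j, hj⟩ : ∃ j, j ∉ ({i, x i} : Finset (Fin k)) := by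
    by_contra! hall
    have h1 := Finset.card_le_card (fun j _ => hall j : Finset.univ ⊆ ({i, x i} : Finset (Fin k)))
    have h2 := Finset.card_le_two (a := i) (b := x i)
    simp at h1
    omega
  simp only [Finset.mem_insert, Finset.mem_singleton, not_or] at hj
  have h3 : x * swap (x i) j = swap (x i) j * x := by
    have := h (swap (x i) j)
    rwa [mul_inv_eq_one, mul_inv_eq_iff_eq_mul] at this
  have h4 := Equiv.congr_fun h3 i
  simp [swap_apply_of_ne_of_ne (fun h => hi h.symm : i ≠ x i) (Ne.symm hj.1)] at h4
  exact hj.2 h4.symm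

/-- A normal subgroup containing all commutators of `x` contains `A_k`, unless `x` is an even element
of it. For `k = 4` this uses that `S₄ / V₄` is centerless. -/
theorem normal_perm_comm {k : ℕ} (hk : 3 ≤ k) (x : Perm (Fin k))
    (N : NormalSubgroupLattice (Perm (Fin k))) (h : ∀ y, x * y * x⁻¹ * y⁻¹ ∈ N.1) :
    sign x = 1 ∧ x ∈ N.1 ∨ alternatingGroup (Fin k) ≤ N.1 := by
  have hbot : N.1 = ⊥ → sign x = 1 ∧ x ∈ N.1 := by
    intro h0
    have := perm_eq_one hk x fun y => by simpa [h0] using h y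
    subst this
    exact ⟨sign_one, N.1.one_mem⟩
  by_cases h4 : k = 4
  · subst h4
    rcases normal_perm_four N with h0 | h0 | h0
    · exact Or.inl (hbot h0)
    · have key : ∀ x : Perm (Fin 4), (∀ y, x * y * x⁻¹ * y⁻¹ ∈ klein.1) → x ∈ klein.1 := by
        set_option maxRecDepth 100000 in decide
      rw [h0] at h ⊢
      exact Or.inl ⟨(key x h).1, key x h⟩
    · exact Or.inr h0
  · rcases normal_perm_of_ne_four hk h4 N with h0 | h0
    · exact Or.inl (hbot h0)
    · exact Or.inr h0

theorem alternatingGroup_ne_top {k : ℕ} (hk : 3 ≤ k) : alternatingGroup (Fin k) ≠ ⊤ := by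
  have : Nontrivial (Fin k) := Fin.nontrivial_iff_two_le.2 (by omega)
  intro h
  have h1 := alternatingGroup.index_eq_two (α := Fin k)
  simp [h] at h1

end Perm

/-! ### The action on the factors of a product of symmetric groups -/

section Final

theorem hasLongChain_factor_iff {ι : Type*} [DecidableEq ι] {n : ι → ℕ} (hn : ∀ i, 3 ≤ n i)
    (j : ι) : HasLongChain (factor (fun i => Perm (Fin (n i))) j) ↔ n j = 4 := by
  constructor
  · rintro ⟨A, B, C, hAB, hBC, hCF⟩
    by_contra h4
    have h1 : (restrict j A).1 < (restrict j B).1 :=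
      restrict_lt_restrict hAB (hBC.le.trans hCF.le)
    have h2 : (restrict j B).1 < (restrict j C).1 := restrict_lt_restrict hBC hCF.le
    have h3 : (restrict j C).1 < ⊤ :=
      lt_of_lt_of_le (show _ < (restrict j (factor _ j)).1 from restrict_lt_restrict hCF le_rfl)
        le_top
    rcases normal_perm_of_ne_four (hn j) h4 (restrict j B) with h | h
    · rw [h] at h1; exact not_lt_bot h1
    · rcases eq_alternatingGroup_or_top (h.trans h2.le) with h5 | h5
      · rw [h5] at h2; exact h.not_gt h2
      · rw [h5] at h3; exact lt_irrefl _ h3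
  · intro h4
    suffices ∀ k (e : k = 4), ∃ A B C : NormalSubgroupLattice (Perm (Fin k)),
        A < B ∧ B < C ∧ C < ⟨⊤, inferInstance⟩ by
      obtain ⟨A, B, C, h1, h2, h3⟩ := this _ h4
      exact ⟨single j A, single j B, single j C, single_lt_single.2 h1, single_lt_single.2 h2,
        single_lt_single.2 h3⟩
    rintro k rfl
    refine ⟨⟨⊥, inferInstance⟩, klein, ⟨alternatingGroup (Fin 4), inferInstance⟩, ?_, ?_, ?_⟩
    · show ⊥ < klein.1
      rw [bot_lt_iff_ne_bot, Ne, Subgroup.eq_bot_iff_forall]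
      intro h
      have := h (swap 0 1 * swap 2 3) (mem_klein.2 (by decide))
      exact absurd this (by decide)
    · show klein.1 < alternatingGroup (Fin 4)
      refine lt_of_le_of_ne klein_le_alternatingGroup fun h => ?_
      have : swap 0 1 * swap 1 2 ∈ klein.1 := by rw [h, mem_alternatingGroup]; decide
      exact absurd (mem_klein.1 this) (by decide)
    · show alternatingGroup (Fin 4) < ⊤
      exact lt_top_iff_ne_top.2 (alternatingGroup_ne_top (by norm_num))

/-- Transport of automorphisms along an order isomorphism. -/
def conjHom {α β : Type*} [LE α] [LE β] (e : α ≃o β) : (α ≃o α) →* (β ≃o β) where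
  toFun σ := e.symm.trans (σ.trans e)
  map_one' := by ext x; simp
  map_mul' σ τ := by ext x; simp

theorem conjHom_injective {α β : Type*} [LE α] [LE β] (e : α ≃o β) :
    Function.Injective (conjHom e) := by
  intro σ τ h
  ext x
  have := DFunLike.congr_fun h (e x)
  simpa [conjHom] using this

/-- Isomorphic groups have isomorphic lattices of normal subgroups. -/
def normalSubgroupCongr {G K : Type*} [Group G] [Group K] (e : G ≃* K) :
    NormalSubgroupLattice G ≃o NormalSubgroupLattice K where
  toEquiv := e.mapSubgroup.toEquiv.subtypeEquiv fun N =>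
    ⟨fun h => h.map _ e.surjective, fun h => by
      have : N = (N.map e.toMonoidHom).comap e.toMonoidHom :=
        (Subgroup.comap_map_eq_self_of_injective e.injective N).symm
      rw [this]
      exact h.comap _⟩
  map_rel_iff' := e.mapSubgroup.le_iff_le

/-- A tower group as a product over the single index type `Σ k, Fin (a k)`. -/
def towerEquiv (a : ℕ → ℕ) : (Π k : ℕ, Π _i : Fin (a k), Perm (Fin k)) ≃*
    (Π j : Σ k : ℕ, Fin (a k), Perm (Fin j.1)) where
  toFun g j := g j.1 j.2
  invFun g k i := g ⟨k, i⟩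
  left_inv _ := rfl
  right_inv _ := rfl
  map_mul' _ _ := rfl

/-- The injection for a product of symmetric groups over an arbitrary finite index type. The
maximal uniform elements are exactly the factors, which gives the permutation of the indices. -/
theorem main_aux {ι : Type*} [Finite ι] {n : ι → ℕ} (hn : ∀ i, 3 ≤ n i) :
    ∃ f : LatAut (Π i, Perm (Fin (n i))) →*
      Perm {j : ι // n j = 4} × Perm {j : ι // n j ≠ 4}, Function.Injective f := by
  classical
  have : ∀ i, Nontrivial (Fin (n i)) := fun i => Fin.nontrivial_iff_two_le.2 (by have := hn i; omega)
  have hchain := fun i => normal_perm_chain (hn i)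
  have hcenter := fun i => perm_eq_one (hn i)
  let F := factor fun i => Perm (Fin (n i))
  let e : ι ≃ {N : NormalSubgroupLattice (Π i, Perm (Fin (n i))) // Maximal IsUniformElt N} :=
    Equiv.ofBijective (fun j => ⟨F j, maximal_isUniformElt_factor hchain hcenter j⟩)
      ⟨fun i j h => factor_le_factor (Subtype.ext_iff.1 h).le, fun N => by
        obtain ⟨j, hj⟩ := exists_eq_factor hchain hcenter N.2
        exact ⟨j, Subtype.ext hj⟩⟩
  let ρ (σ : LatAut (Π i, Perm (Fin (n i)))) : Perm ι :=
    e.trans ((σ.toEquiv.subtypeEquiv (maximal_isUniformElt_apply_iff σ)).trans e.symm)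
  have hρ : ∀ σ j, F (ρ σ j) = σ (F j) := by
    intro σ j
    have : e (ρ σ j) = σ.toEquiv.subtypeEquiv (maximal_isUniformElt_apply_iff σ) (e j) := by
      simp [ρ]
    exact Subtype.ext_iff.1 this
  have hFinj : Function.Injective F := fun i j h => factor_le_factor h.le
  have hfour : ∀ σ j, n (ρ σ j) = 4 ↔ n j = 4 := by
    intro σ j
    rw [← hasLongChain_factor_iff hn, ← hasLongChain_factor_iff hn j]
    change HasLongChain (F _) ↔ _
    rw [hρ, hasLongChain_apply_iff]
  have hmul : ∀ σ τ j, ρ (σ * τ) j = ρ σ (ρ τ j) := by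
    intro σ τ j
    apply hFinj
    rw [hρ, hρ, hρ]; rfl
  refine ⟨MonoidHom.mk' (fun σ => ((ρ σ).subtypePerm (hfour σ),
    (ρ σ).subtypePerm fun j => not_congr (hfour σ j))) fun σ τ => ?_, ?_⟩
  · ext j
    · exact hmul σ τ j
    · exact hmul σ τ j
  · rw [injective_iff_map_eq_one]
    intro σ hσ
    have hone : ∀ j, ρ σ j = j := by
      intro j
      by_cases h : n j = 4
      · exact Subtype.ext_iff.1 (Equiv.congr_fun (Prod.ext_iff.1 hσ).1 ⟨j, h⟩)
      · exact Subtype.ext_iff.1 (Equiv.congr_fun (Prod.ext_iff.1 hσ).2 ⟨j, h⟩)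
    refine eq_one_of_fixes (s := fun i => sign) σ hchain ?_ ?_ fun j => ?_
    · intro i x hx N hN
      rcases normal_perm_comm (hn i) x N hN with h | h
      · exact h.2
      · exact h (mem_alternatingGroup.2 hx)
    · intro i x hx N hN
      rcases normal_perm_comm (hn i) x N hN with h | h
      · exact absurd h.1 hx
      · exact fun y hy => h (mem_alternatingGroup.2 hy)
    · have := hρ σ j
      rw [hone] at this
      exact this.symm

end Final

end TowerLattice

/-- **Factor Permutation Lemma (injection part).** For a tower group `G` with
index type `ι = Σ k, Fin (a k)`, `𝒜 = {j // j.1 = 4}`, `ℬ = {j // j.1 ≠ 4}`,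
there is an injective group homomorphism `LatAut(G) ↪ Perm 𝒜 × Perm ℬ`. -/
theorem latAut_injects_into_perms
    (a : ℕ → ℕ) (ha_fin : {k : ℕ | a k ≠ 0}.Finite)
    (ha_lt : ∀ k < 3, a k = 0) :
    ∃ f : LatAut (Π k : ℕ, Π _i : Fin (a k), Equiv.Perm (Fin k)) →*
        Equiv.Perm {j : Σ k : ℕ, Fin (a k) // j.1 = 4} ×
          Equiv.Perm {j : Σ k : ℕ, Fin (a k) // j.1 ≠ 4},
      Function.Injective f := by
  have hfin : Finite (Σ k : ℕ, Fin (a k)) := by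
    have := ha_fin.to_subtype
    refine Finite.of_injective (β := Σ k : {k : ℕ | a k ≠ 0}, Fin (a k))
      (fun j => ⟨⟨j.1, fun h => (Fin.cast h j.2).elim0⟩, j.2⟩) ?_
    rintro ⟨k, i⟩ ⟨k', i'⟩ h
    simp only [Sigma.mk.injEq, Subtype.mk.injEq] at h
    obtain ⟨rfl, h⟩ := h
    simpa using h
  have hn : ∀ j : Σ k : ℕ, Fin (a k), 3 ≤ j.1 := by
    intro j
    by_contra h
    exact (Fin.cast (ha_lt j.1 (by omega)) j.2).elim0
  obtain ⟨f, hf⟩ := TowerLattice.main_aux (n := fun j : Σ k : ℕ, Fin (a k) => j.1) hn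
  exact ⟨f.comp (TowerLattice.conjHom (TowerLattice.normalSubgroupCongr (TowerLattice.towerEquiv a))),
    hf.comp (TowerLattice.conjHom_injective _)⟩
end

section
/- Realisation Lemma: Let G be a tower group and let σ be a permutation of the index type ι = Σ k : ℕ, Fin (a k) that preserves the partition into S_4-slots and non-S_4-slots, i.e., (σ j).1 = 4 ↔ j.1 = 4 for every j ∈ ι. Then there exists a lattice automorphism φ ∈ LatAut(G) such that φ maps the factor F_j to the factor F_{σ j} for every j ∈ ι. -/
/-! ### Levels in symmetric groups -/

open Equiv Equiv.Perm in
/-- The level of `x ∈ S_k`: the position in the chain `1 ≤ V ≤ A_k ≤ S_k` of the smallest member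
containing `x`, where `V` is the Klein four-group if `k = 4` (its nontrivial elements being the
even involutions) and is omitted otherwise. -/
def permLevel {k : ℕ} (x : Perm (Fin k)) : ℕ :=
  if x = 1 then 0 else if sign x = -1 then 3 else if k = 4 ∧ x * x = 1 then 1 else 2

section Level

open Equiv Equiv.Perm

variable {k : ℕ}

lemma permLevel_one : permLevel (1 : Perm (Fin k)) = 0 := by simp [permLevel]

lemma permLevel_eq_zero {x : Perm (Fin k)} : permLevel x = 0 ↔ x = 1 := by
  unfold permLevel; split_ifs <;> simp_all

lemma permLevel_eq_three {x : Perm (Fin k)} : permLevel x = 3 ↔ sign x = -1 := by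
  unfold permLevel; split_ifs with h <;> simp_all

lemma permLevel_inv (x : Perm (Fin k)) : permLevel x⁻¹ = permLevel x := by
  have h : x⁻¹ * x⁻¹ = 1 ↔ x * x = 1 := by rw [← mul_inv_rev, inv_eq_one]
  simp only [permLevel, inv_eq_one, sign_inv, h]

lemma permLevel_conj (s x : Perm (Fin k)) : permLevel (s * x * s⁻¹) = permLevel x := by
  have h : s * x * s⁻¹ * (s * x * s⁻¹) = 1 ↔ x * x = 1 := by
    rw [← conj_eq_one_iff (a := s) (b := x * x)]; simp [mul_assoc]
  have h2 : sign (s * x * s⁻¹) = sign x := by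
    rw [map_mul, map_mul, sign_inv, mul_right_comm, Int.units_mul_self, one_mul]
  simp only [permLevel, conj_eq_one_iff, h2, h]

lemma sign_eq_of_permLevel_eq {x y : Perm (Fin k)} (h : permLevel y = permLevel x) :
    sign y = sign x := by
  have := permLevel_eq_three (x := x)
  have := permLevel_eq_three (x := y)
  rcases Int.units_eq_one_or (sign x) with h1 | h1 <;>
  rcases Int.units_eq_one_or (sign y) with h2 | h2 <;> simp_all

lemma alternatingGroup_le_of_isThreeCycle_mem {M : Subgroup (Perm (Fin k))} (hM : M.Normal)
    {c : Perm (Fin k)} (hc : c.IsThreeCycle) (hcM : c ∈ M) : alternatingGroup (Fin k) ≤ M := by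
  rw [← closure_three_cycles_eq_alternating, Subgroup.closure_le]
  intro d hd
  obtain ⟨s, rfl⟩ := isConj_iff.1 (isConj_iff_cycleType_eq.2
    ((show c.cycleType = {3} from hc).trans (show d.cycleType = {3} from hd).symm))
  exact hM.conj_mem c hcM s

/-- The commutators of a nontrivial element of `S_3` include a three-cycle. -/
lemma exists_card_support_three : ∀ x : Perm (Fin 3), x ≠ 1 →
    ∃ s, (x * (s * x⁻¹ * s⁻¹)).support.card = 3 := by
  decide +kernel

/-- The commutators of an element of `S_4` outside the Klein four-group include a three-cycle. -/
lemma exists_card_support_four : ∀ x : Perm (Fin 4), ¬ (sign x = 1 ∧ x * x = 1) →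
    ∃ s, (x * (s * x⁻¹ * s⁻¹)).support.card = 3 := by
  decide +kernel

lemma exists_conj_four : ∀ x : Perm (Fin 4), x ≠ 1 → sign x = 1 → x * x = 1 →
    ∀ y : Perm (Fin 4), y ≠ 1 → sign y = 1 → y * y = 1 → ∃ s, s * x * s⁻¹ = y := by
  decide +kernel

/-- Since `S_k` is centreless, the commutators of a nontrivial `x` are not all trivial; being even,
they generate `A_k` as a normal subgroup when `A_k` is simple. -/
lemma alternatingGroup_le_of_five_le (hk : 5 ≤ k) {M : Subgroup (Perm (Fin k))} (hM : M.Normal)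
    {x : Perm (Fin k)} (hx : x ≠ 1) (h : ∀ s, x * (s * x⁻¹ * s⁻¹) ∈ M) :
    alternatingGroup (Fin k) ≤ M := by
  have hs : ∃ s, x * (s * x⁻¹ * s⁻¹) ≠ 1 := by
    by_contra! hc
    refine hx (Equiv.ext fun p => ?_)
    by_contra hp
    rw [one_apply] at hp
    obtain ⟨q, -, hq⟩ : ∃ q ∈ Finset.univ, q ∉ ({p, x p} : Finset (Fin k)) :=
      Finset.exists_mem_notMem_of_card_lt_card
        (Finset.card_le_two.trans_lt (by rw [Finset.card_fin]; omega))
    simp only [Finset.mem_insert, Finset.mem_singleton, not_or] at hq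
    -- This transposition fixes `p` but moves `x p`, so it does not commute with `x`.
    have h1 : x * swap (x p) q = swap (x p) q * x := by
      have := hc (swap (x p) q)
      rw [mul_eq_one_iff_eq_inv, mul_inv_rev, mul_inv_rev, inv_inv, inv_inv] at this
      nth_rewrite 1 [this]
      group
    have h2 := Equiv.ext_iff.1 h1 p
    rw [mul_apply, mul_apply, swap_apply_left, swap_apply_of_ne_of_ne (Ne.symm hp)
      (Ne.symm hq.1)] at h2
    exact hq.2 h2.symm
  obtain ⟨s, hs⟩ := hs
  have : IsSimpleGroup (alternatingGroup (Fin k)) :=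
    alternatingGroup.isSimpleGroup (by simpa using hk)
  have hev : x * (s * x⁻¹ * s⁻¹) ∈ alternatingGroup (Fin k) := by
    rw [mem_alternatingGroup]
    simp only [map_mul, sign_inv]
    rcases Int.units_eq_one_or (sign x) with h1 | h1 <;>
    rcases Int.units_eq_one_or (sign s) with h2 | h2 <;> simp [h1, h2]
  rcases (hM.subgroupOf (alternatingGroup (Fin k))).eq_bot_or_eq_top with h0 | h0
  · have : (⟨_, hev⟩ : alternatingGroup (Fin k)) ∈ M.subgroupOf (alternatingGroup (Fin k)) := by
      rw [Subgroup.mem_subgroupOf]; exact h s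
    rw [h0, Subgroup.mem_bot] at this
    exact absurd (congrArg Subtype.val this) hs
  · exact Subgroup.subgroupOf_eq_top.1 h0

/-- A normal subgroup containing all commutators of `x` identifies `x` with every element of the
same level. -/
lemma mul_inv_mem_of_permLevel_eq (hk : 3 ≤ k) {M : Subgroup (Perm (Fin k))} (hM : M.Normal)
    {x y : Perm (Fin k)} (h : ∀ s, x * (s * x⁻¹ * s⁻¹) ∈ M) (hxy : permLevel y = permLevel x) :
    y * x⁻¹ ∈ M := by
  by_cases hx : x = 1
  · subst hx
    rw [permLevel_one, permLevel_eq_zero] at hxy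
    simp [hxy, M.one_mem]
  have hy : y ≠ 1 := by
    rintro rfl
    exact hx (permLevel_eq_zero.1 (hxy.symm.trans permLevel_one))
  have hsgn := sign_eq_of_permLevel_eq hxy
  have hA : y * x⁻¹ ∈ alternatingGroup (Fin k) := by
    rw [mem_alternatingGroup, map_mul, sign_inv, hsgn, Int.units_mul_self]
  rcases (by omega : k = 3 ∨ k = 4 ∨ 5 ≤ k) with rfl | rfl | h5
  · obtain ⟨s, hs⟩ := exists_card_support_three x hx
    exact alternatingGroup_le_of_isThreeCycle_mem hM (card_support_eq_three_iff.1 hs) (h s) hA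
  · by_cases hV : sign x = 1 ∧ x * x = 1
    · have hyV : y * y = 1 := by
        by_contra hne
        have h1 : permLevel x = 1 := by simp [permLevel, hx, hV]
        have h2 : permLevel y = 2 := by simp [permLevel, hy, hne, hsgn, hV.1]
        omega
      obtain ⟨s, rfl⟩ := exists_conj_four x hx hV.1 hV.2 y hy (hsgn.trans hV.1) hyV
      have := M.inv_mem (h s)
      simpa [mul_assoc] using this
    · obtain ⟨s, hs⟩ := exists_card_support_four x hV
      exact alternatingGroup_le_of_isThreeCycle_mem hM (card_support_eq_three_iff.1 hs) (h s) hA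
  · exact alternatingGroup_le_of_five_le h5 hM hx h hA

/-- The levels `(l, m, n)` of triples `(g, h, g * h)` that occur in `S_k` also occur in `S_l`.
For `k ≠ 4` the reason is that those allowed by the signs all occur as soon as there are an odd
element and an even element that is not an involution. -/
lemma exists_permLevel_mul {l : ℕ} (hl : 3 ≤ l) (hkl : k = 4 ↔ l = 4)
    (g h : Perm (Fin k)) : ∃ g' h' : Perm (Fin l), permLevel g' = permLevel g ∧
      permLevel h' = permLevel h ∧ permLevel (g' * h') = permLevel (g * h) := by
  by_cases hk4 : k = 4
  · obtain rfl := hk4.trans (hkl.1 hk4).symm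
    exact ⟨g, h, rfl, rfl, rfl⟩
  have hl4 : l ≠ 4 := fun e => hk4 (hkl.2 e)
  obtain ⟨c, t, hc, hcc, hsc, hst⟩ : ∃ c t : Perm (Fin l),
      c ≠ 1 ∧ c * c ≠ 1 ∧ sign c = 1 ∧ sign t = -1 := by
    let p : Fin l := ⟨0, by omega⟩
    let q : Fin l := ⟨1, by omega⟩
    let r : Fin l := ⟨2, by omega⟩
    have hpq : p ≠ q := by simp [p, q]
    have hqr : q ≠ r := by simp [r, q]
    have hpr : p ≠ r := by simp [p, r]
    have hcc : swap p q * swap q r * (swap p q * swap q r) ≠ 1 := by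
      intro e
      have := Equiv.ext_iff.1 e p
      simp [swap_apply_of_ne_of_ne, hpq, hpr, hqr.symm, hpr.symm] at this
    refine ⟨swap p q * swap q r, swap p q, ?_, hcc, ?_, sign_swap hpq⟩
    · intro e; rw [e] at hcc; simp at hcc
    · rw [map_mul, sign_swap hpq, sign_swap hqr]; rfl
  have ht : t ≠ 1 := by rintro rfl; simp at hst
  have lev : ∀ {m : ℕ}, m ≠ 4 → ∀ x : Perm (Fin m),
      permLevel x = if x = 1 then 0 else if sign x = -1 then 3 else 2 := by
    intro m hm x; simp [permLevel, hm]
  have one_of : ∀ {m : ℕ} (x : Perm (Fin m)), sign x = -1 → x ≠ 1 := by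
    rintro m x hx rfl; simp at hx
  have real : ∀ x : Perm (Fin k), ∃ x' : Perm (Fin l), permLevel x' = permLevel x := by
    intro x
    by_cases hx : x = 1
    · exact ⟨1, by rw [hx, permLevel_one, permLevel_one]⟩
    rcases Int.units_eq_one_or (sign x) with h1 | h1
    · exact ⟨c, by simp [lev hk4, lev hl4, hx, h1, hc, hsc]⟩
    · exact ⟨t, by simp [lev hk4, lev hl4, hx, h1, ht, hst]⟩
  by_cases hg : g = 1
  · obtain ⟨h', hh'⟩ := real h
    exact ⟨1, h', by simp [hg, permLevel_one], hh', by simp [hg, hh']⟩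
  by_cases hh : h = 1
  · obtain ⟨g', hg'⟩ := real g
    exact ⟨g', 1, hg', by simp [hh, permLevel_one], by simp [hh, hg']⟩
  simp only [lev hk4, lev hl4]
  rcases Int.units_eq_one_or (sign g) with h1 | h1 <;>
  rcases Int.units_eq_one_or (sign h) with h2 | h2
  · by_cases hgh : g * h = 1
    · exact ⟨c, c⁻¹, by simp [*], by simp [*], by simp [*]⟩
    · exact ⟨c, c, by simp [*], by simp [*], by simp [*]⟩
  · have := one_of (g * h) (by simp [*])
    have := one_of (c * t) (by simp [*])
    exact ⟨c, t, by simp [*], by simp [*], by simp [*]⟩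
  · have := one_of (g * h) (by simp [*])
    have := one_of (t * c) (by simp [*])
    exact ⟨t, c, by simp [*], by simp [*], by simp [*]⟩
  · by_cases hgh : g * h = 1
    · have htt : t * t⁻¹ = 1 := mul_inv_cancel t
      exact ⟨t, t⁻¹, by simp [*], by simp [*], by simp [*]⟩
    · have := one_of (t⁻¹ * c) (by simp [*])
      exact ⟨t, t⁻¹ * c, by simp [*], by simp [*], by simp [*]⟩

lemma exists_permLevel {l : ℕ} (hl : 3 ≤ l) (hkl : k = 4 ↔ l = 4) (g : Perm (Fin k)) :
    ∃ g' : Perm (Fin l), permLevel g' = permLevel g :=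
  let ⟨g', _, h, _⟩ := exists_permLevel_mul hl hkl g 1
  ⟨g', h⟩

end Level

/-! ### Normal subgroups of tower groups -/

section Tower

variable {a : ℕ → ℕ}

/-- The tower group with `a k` factors `S_k`. -/
abbrev TowerGroup (a : ℕ → ℕ) := Π k : ℕ, Π _i : Fin (a k), Equiv.Perm (Fin k)

lemma three_le_slot (ha_lt : ∀ k < 3, a k = 0) (j : Σ k : ℕ, Fin (a k)) : 3 ≤ j.1 := by
  by_contra h
  have h0 := ha_lt j.1 (by omega)
  have := j.2.2
  omega

lemma towerEmb_apply_self (j : Σ k : ℕ, Fin (a k)) (s : Equiv.Perm (Fin j.1)) :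
    towerEmb a j s j.1 j.2 = s := by
  simp [towerEmb]

lemma towerEmb_apply_of_ne {i j : Σ k : ℕ, Fin (a k)} (h : i ≠ j) (s : Equiv.Perm (Fin j.1)) :
    towerEmb a j s i.1 i.2 = 1 := by
  obtain ⟨k, i⟩ := i
  obtain ⟨l, j⟩ := j
  by_cases hk : k = l
  · subst hk
    have : i ≠ j := fun e => h (by rw [e])
    simp [towerEmb, this]
  · simp [towerEmb, hk]

lemma tower_ext {g h : TowerGroup a} (H : ∀ j : Σ k : ℕ, Fin (a k), g j.1 j.2 = h j.1 j.2) :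
    g = h :=
  funext fun k => funext fun i => H ⟨k, i⟩

lemma mem_towerFactor {j : Σ k : ℕ, Fin (a k)} {g : TowerGroup a} :
    g ∈ towerFactor a j ↔ ∀ i : Σ k : ℕ, Fin (a k), i ≠ j → g i.1 i.2 = 1 := by
  constructor
  · rintro ⟨s, rfl⟩ i hi
    exact towerEmb_apply_of_ne hi s
  · intro h
    refine ⟨g j.1 j.2, tower_ext fun i => ?_⟩
    by_cases hi : i = j
    · subst hi; exact towerEmb_apply_self _ _
    · rw [towerEmb_apply_of_ne hi, h i hi]

lemma mem_of_towerEmb_mem (ha_fin : {k : ℕ | a k ≠ 0}.Finite) {N : Subgroup (TowerGroup a)}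
    {g : TowerGroup a} (h : ∀ j : Σ k : ℕ, Fin (a k), towerEmb a j (g j.1 j.2) ∈ N) : g ∈ N := by
  refine Submonoid.pi_mem_of_mulSingle_mem_aux ha_fin.toFinset g ?_ ?_
  · intro k hk
    funext i
    have : a k = 0 := by simpa using hk
    exact absurd i.2 (by omega)
  · intro k _
    exact Subgroup.pi_mem_of_mulSingle_mem
      (H := N.comap (MonoidHom.mulSingle (fun k => Π _i : Fin (a k), Equiv.Perm (Fin k)) k))
      (g k) fun i => h ⟨k, i⟩

/-- A normal subgroup of a tower group is saturated: membership depends only on the levels of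
the coordinates. -/
lemma mem_of_permLevel_eq (ha_fin : {k : ℕ | a k ≠ 0}.Finite) (ha_lt : ∀ k < 3, a k = 0)
    {N : Subgroup (TowerGroup a)} (hN : N.Normal) {x y : TowerGroup a} (hx : x ∈ N)
    (hxy : ∀ j : Σ k : ℕ, Fin (a k), permLevel (y j.1 j.2) = permLevel (x j.1 j.2)) : y ∈ N := by
  suffices y * x⁻¹ ∈ N by simpa using N.mul_mem this hx
  refine mem_of_towerEmb_mem ha_fin fun j => ?_
  refine mul_inv_mem_of_permLevel_eq (M := N.comap (towerEmb a j)) (three_le_slot ha_lt j)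
    (hN.comap _) (fun s => ?_) (hxy j)
  rw [Subgroup.mem_comap]
  have : towerEmb a j (x j.1 j.2 * (s * (x j.1 j.2)⁻¹ * s⁻¹)) =
      x * (towerEmb a j s * x⁻¹ * (towerEmb a j s)⁻¹) := by
    refine tower_ext fun i => ?_
    by_cases hi : i = j
    · subst hi
      simp [towerEmb_apply_self]
    · simp [towerEmb_apply_of_ne hi]
  rw [this]
  exact N.mul_mem hx (hN.conj_mem _ (N.inv_mem hx) _)

/-- The transport of a normal subgroup `N` along a permutation `σ` of the slots: the elements whose
vector of levels is the `σ`-translate of that of an element of `N`. -/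
def levelTransport (ha_fin : {k : ℕ | a k ≠ 0}.Finite) (ha_lt : ∀ k < 3, a k = 0)
    (σ : Equiv.Perm (Σ k : ℕ, Fin (a k)))
    (hσ : ∀ j : Σ k : ℕ, Fin (a k), (σ j).1 = 4 ↔ j.1 = 4)
    (N : NormalSubgroupLattice (TowerGroup a)) : NormalSubgroupLattice (TowerGroup a) :=
  ⟨{ carrier := {g | ∃ x ∈ N.1, ∀ j, permLevel (g (σ j).1 (σ j).2) = permLevel (x j.1 j.2)}
     one_mem' := ⟨1, N.1.one_mem, fun j => by simp [permLevel_one]⟩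
     inv_mem' := by
       rintro g ⟨x, hx, h⟩
       exact ⟨x⁻¹, N.1.inv_mem hx, fun j => by simpa [permLevel_inv] using h j⟩
     mul_mem' := by
       rintro g h ⟨x, hx, hgx⟩ ⟨y, hy, hhy⟩
       -- The product `x * y` may have the wrong levels; replace both factors, within `N`.
       choose x' y' h1 h2 h3 using fun j : Σ k : ℕ, Fin (a k) =>
         exists_permLevel_mul (three_le_slot ha_lt j) (hσ j)
           (g (σ j).1 (σ j).2) (h (σ j).1 (σ j).2)
       have hx' : (fun k i => x' ⟨k, i⟩ : TowerGroup a) ∈ N.1 :=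
         mem_of_permLevel_eq ha_fin ha_lt N.2 hx fun j => (h1 j).trans (hgx j)
       have hy' : (fun k i => y' ⟨k, i⟩ : TowerGroup a) ∈ N.1 :=
         mem_of_permLevel_eq ha_fin ha_lt N.2 hy fun j => (h2 j).trans (hhy j)
       exact ⟨_, N.1.mul_mem hx' hy', fun j => (h3 j).symm⟩ },
   ⟨by
     rintro g ⟨x, hx, h⟩ s
     exact ⟨x, hx, fun j => (permLevel_conj _ _).trans (h j)⟩⟩⟩

lemma mem_levelTransport {ha_fin : {k : ℕ | a k ≠ 0}.Finite} {ha_lt : ∀ k < 3, a k = 0}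
    {σ : Equiv.Perm (Σ k : ℕ, Fin (a k))}
    {hσ : ∀ j : Σ k : ℕ, Fin (a k), (σ j).1 = 4 ↔ j.1 = 4}
    {N : NormalSubgroupLattice (TowerGroup a)} {g : TowerGroup a} :
    g ∈ (levelTransport ha_fin ha_lt σ hσ N).1 ↔
      ∃ x ∈ N.1, ∀ j, permLevel (g (σ j).1 (σ j).2) = permLevel (x j.1 j.2) :=
  Iff.rfl

lemma levelTransport_mono (ha_fin : {k : ℕ | a k ≠ 0}.Finite) (ha_lt : ∀ k < 3, a k = 0)
    (σ : Equiv.Perm (Σ k : ℕ, Fin (a k)))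
    (hσ : ∀ j : Σ k : ℕ, Fin (a k), (σ j).1 = 4 ↔ j.1 = 4) :
    Monotone (levelTransport ha_fin ha_lt σ hσ) :=
  fun _ _ hNM _ ⟨x, hx, h⟩ => ⟨x, hNM hx, h⟩

/-- An element of a tower group whose levels are those of `g`, translated by `σ`. -/
lemma exists_translate (ha_lt : ∀ k < 3, a k = 0) (σ : Equiv.Perm (Σ k : ℕ, Fin (a k)))
    (hσ : ∀ j : Σ k : ℕ, Fin (a k), (σ j).1 = 4 ↔ j.1 = 4) (g : TowerGroup a) :
    ∃ x : TowerGroup a, ∀ j, permLevel (g (σ j).1 (σ j).2) = permLevel (x j.1 j.2) := by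
  choose x hx using fun j : Σ k : ℕ, Fin (a k) =>
    exists_permLevel (three_le_slot ha_lt j) (hσ j) (g (σ j).1 (σ j).2)
  exact ⟨fun k i => x ⟨k, i⟩, fun j => (hx j).symm⟩

lemma levelTransport_leftInverse (ha_fin : {k : ℕ | a k ≠ 0}.Finite) (ha_lt : ∀ k < 3, a k = 0)
    (σ τ : Equiv.Perm (Σ k : ℕ, Fin (a k)))
    (hσ : ∀ j : Σ k : ℕ, Fin (a k), (σ j).1 = 4 ↔ j.1 = 4)
    (hτ : ∀ j : Σ k : ℕ, Fin (a k), (τ j).1 = 4 ↔ j.1 = 4)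
    (hτσ : ∀ j, τ (σ j) = j) :
    Function.LeftInverse (levelTransport ha_fin ha_lt τ hτ) (levelTransport ha_fin ha_lt σ hσ) := by
  intro N
  refine Subtype.ext (Subgroup.ext fun g => ⟨?_, fun hg => ?_⟩)
  · rintro ⟨h, ⟨x, hx, hhx⟩, hgh⟩
    refine mem_of_permLevel_eq ha_fin ha_lt N.2 hx fun j => ?_
    have := hgh (σ j)
    rw [hτσ] at this
    exact this.trans (hhx j)
  · obtain ⟨h, hh⟩ := exists_translate ha_lt τ hτ g
    refine ⟨h, ⟨g, hg, fun j => ?_⟩, hh⟩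
    have := hh (σ j)
    rw [hτσ] at this
    exact this.symm

end Tower

/-- **Realisation Lemma.** For a tower group `G` and any permutation `σ` of the
index type preserving the partition into `S₄`-slots and non-`S₄`-slots, there
is a lattice automorphism `φ` of `G` mapping each factor `F_j` to `F_{σ j}`. -/
theorem latAut_realisation
    (a : ℕ → ℕ) (ha_fin : {k : ℕ | a k ≠ 0}.Finite)
    (ha_lt : ∀ k < 3, a k = 0)
    (σ : Equiv.Perm (Σ k : ℕ, Fin (a k)))
    (hσ : ∀ j : Σ k : ℕ, Fin (a k), (σ j).1 = 4 ↔ j.1 = 4) :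
    ∃ φ : LatAut (Π k : ℕ, Π _i : Fin (a k), Equiv.Perm (Fin k)),
      ∀ j : Σ k : ℕ, Fin (a k),
        ∀ N : NormalSubgroupLattice (Π k : ℕ, Π _i : Fin (a k), Equiv.Perm (Fin k)),
          N.1 = towerFactor a j → (φ N).1 = towerFactor a (σ j) := by
  have hσ' : ∀ j : Σ k : ℕ, Fin (a k), (σ.symm j).1 = 4 ↔ j.1 = 4 := fun j => by
    simpa using (hσ (σ.symm j)).symm
  let e : NormalSubgroupLattice (TowerGroup a) ≃ NormalSubgroupLattice (TowerGroup a) :=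
    { toFun := levelTransport ha_fin ha_lt σ hσ
      invFun := levelTransport ha_fin ha_lt σ.symm hσ'
      left_inv := levelTransport_leftInverse _ _ _ _ _ _ σ.symm_apply_apply
      right_inv := levelTransport_leftInverse _ _ _ _ _ _ σ.apply_symm_apply }
  refine ⟨e.toOrderIso (levelTransport_mono ha_fin ha_lt σ hσ)
    (levelTransport_mono ha_fin ha_lt σ.symm hσ'),
    fun j N hN => ?_⟩
  change (levelTransport ha_fin ha_lt σ hσ N).1 = _
  ext g
  rw [mem_levelTransport, mem_towerFactor, hN]
  constructor
  · rintro ⟨x, hx, hgx⟩ i hi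
    have hne : σ.symm i ≠ j := fun e => hi (by rw [← e, σ.apply_symm_apply])
    have := hgx (σ.symm i)
    rw [mem_towerFactor.1 hx _ hne, permLevel_one, permLevel_eq_zero, σ.apply_symm_apply] at this
    exact this
  · intro hg
    obtain ⟨x, hx⟩ := exists_translate ha_lt σ hσ g
    refine ⟨x, mem_towerFactor.2 fun i hi => ?_, hx⟩
    have := hx i
    rwa [hg _ (σ.injective.ne hi), permLevel_one, eq_comm, permLevel_eq_zero] at this
end

section
/- Uniqueness of factor complements: Let G be a tower group and j ∈ ι. Then C_j := ⨆_{j' ≠ j} F_{j'} is the unique normal subgroup C of G satisfying F_j ⊓ C = ⊥ and F_j ⊔ C = ⊤. -/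
/-- Evaluation of an element of the tower group at the slot `j`. -/
def towerEval (a : ℕ → ℕ) (j : Σ k : ℕ, Fin (a k)) :
    (Π k : ℕ, Π _i : Fin (a k), Equiv.Perm (Fin k)) →* Equiv.Perm (Fin j.1) where
  toFun g := g j.1 j.2
  map_one' := rfl
  map_mul' _ _ := rfl

theorem towerEval_emb_self (a : ℕ → ℕ) (j : Σ k : ℕ, Fin (a k)) (σ : Equiv.Perm (Fin j.1)) :
    towerEval a j (towerEmb a j σ) = σ := by
  simp [towerEval, towerEmb]

theorem towerEval_emb_of_ne (a : ℕ → ℕ) {j x : Σ k : ℕ, Fin (a k)} (h : x ≠ j)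
    (σ : Equiv.Perm (Fin x.1)) : towerEval a j (towerEmb a x σ) = 1 := by
  obtain ⟨k, i⟩ := j
  obtain ⟨l, m⟩ := x
  by_cases hk : k = l
  · subst hk
    have hi : i ≠ m := fun e => h (by rw [e])
    simp [towerEval, towerEmb, Pi.mulSingle_eq_of_ne hi]
  · simp [towerEval, towerEmb, Pi.mulSingle_eq_of_ne hk]

theorem tower_ext_s13 (a : ℕ → ℕ) {g h : Π k : ℕ, Π _i : Fin (a k), Equiv.Perm (Fin k)}
    (H : ∀ x, towerEval a x g = towerEval a x h) : g = h := by
  funext k i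
  exact H ⟨k, i⟩

theorem towerFactor_normal (a : ℕ → ℕ) (j : Σ k : ℕ, Fin (a k)) : (towerFactor a j).Normal := by
  refine ⟨?_⟩
  rintro _ ⟨σ, rfl⟩ g
  refine ⟨towerEval a j g * σ * (towerEval a j g)⁻¹, tower_ext_s13 a fun x => ?_⟩
  by_cases hx : j = x
  · subst hx
    simp only [map_mul, map_inv, towerEval_emb_self]
  · simp only [map_mul, map_inv, towerEval_emb_of_ne a hx, mul_one, inv_one, mul_inv_cancel]

/-- An element supported on a finite set of slots and trivial at `j` is a product of elements of
the factors other than `F_j`; by induction on the support, splitting off one component. -/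
theorem mem_iSup_of_support (a : ℕ → ℕ) (j : Σ k : ℕ, Fin (a k))
    (T : Finset (Σ k : ℕ, Fin (a k))) :
    ∀ g : Π k : ℕ, Π _i : Fin (a k), Equiv.Perm (Fin k), (∀ x ∉ T, towerEval a x g = 1) →
      towerEval a j g = 1 →
      g ∈ ⨆ (j' : Σ k : ℕ, Fin (a k)) (_ : j' ≠ j), towerFactor a j' := by
  induction T using Finset.induction_on with
  | empty =>
    intro g hg _
    have : g = 1 := tower_ext_s13 a fun x => by rw [hg x (Finset.notMem_empty x), map_one]
    rw [this]
    exact one_mem _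
  | insert x T hx ih =>
    intro g hg hj
    have hrest : (towerEmb a x (towerEval a x g))⁻¹ * g ∈
        ⨆ (j' : Σ k : ℕ, Fin (a k)) (_ : j' ≠ j), towerFactor a j' := by
      refine ih _ (fun y hy => ?_) ?_
      · by_cases hxy : x = y
        · subst hxy
          rw [map_mul, map_inv, towerEval_emb_self, inv_mul_cancel]
        · rw [map_mul, map_inv, towerEval_emb_of_ne a hxy, inv_one, one_mul]
          exact hg y (by simp [Ne.symm hxy, hy])
      · by_cases hxj : x = j
        · subst hxj
          rw [map_mul, map_inv, towerEval_emb_self, inv_mul_cancel]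
        · rw [map_mul, map_inv, towerEval_emb_of_ne a hxj, inv_one, one_mul, hj]
    have hfirst : towerEmb a x (towerEval a x g) ∈
        ⨆ (j' : Σ k : ℕ, Fin (a k)) (_ : j' ≠ j), towerFactor a j' := by
      by_cases hxj : x = j
      · subst hxj
        rw [hj, map_one]
        exact one_mem _
      · exact Subgroup.mem_iSup_of_mem x (Subgroup.mem_iSup_of_mem hxj ⟨_, rfl⟩)
    simpa using mul_mem hfirst hrest

theorem iSup_towerFactor_eq_ker (a : ℕ → ℕ) (ha_fin : {k : ℕ | a k ≠ 0}.Finite)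
    (j : Σ k : ℕ, Fin (a k)) :
    ⨆ (j' : Σ k : ℕ, Fin (a k)) (_ : j' ≠ j), towerFactor a j' = (towerEval a j).ker := by
  apply le_antisymm
  · refine iSup₂_le fun x hx => ?_
    rintro _ ⟨σ, rfl⟩
    exact towerEval_emb_of_ne a hx σ
  · intro g hg
    refine mem_iSup_of_support a j (ha_fin.toFinset.sigma fun _ => Finset.univ) g
      (fun x hx => absurd ?_ hx) hg
    simpa using x.2.pos.ne'

/-- A permutation of at least three points that commutes with every permutation is trivial. -/
theorem perm_eq_one_of_central {k : ℕ} (hk : 3 ≤ k) (τ : Equiv.Perm (Fin k))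
    (h : ∀ σ : Equiv.Perm (Fin k), σ * τ = τ * σ) : τ = 1 := by
  ext x : 1
  by_contra hx
  -- A transposition that fixes `x` and moves `τ x` does not commute with `τ`.
  obtain ⟨z, hzx, hzt⟩ : ∃ z, z ≠ x ∧ z ≠ τ x := by
    have hc : ({x, τ x} : Finset (Fin k)).card < (Finset.univ : Finset (Fin k)).card :=
      lt_of_le_of_lt Finset.card_le_two (by rw [Finset.card_univ, Fintype.card_fin]; omega)
    obtain ⟨z, -, hz⟩ := Finset.exists_mem_notMem_of_card_lt_card hc
    exact ⟨z, by simpa using hz⟩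
  have hne : x ≠ τ x := fun e => hx e.symm
  have := congrArg (fun f : Equiv.Perm (Fin k) => f x) (h (Equiv.swap (τ x) z))
  simp only [Equiv.Perm.mul_apply, Equiv.swap_apply_left,
    Equiv.swap_apply_of_ne_of_ne hne hzx.symm] at this
  exact hzt this

/-- **Uniqueness of factor complements.** In a tower group, for each slot `j`,
`C_j = ⨆_{j\' ≠ j} F_{j\'}` is the unique normal subgroup `C` with
`F_j ⊓ C = ⊥` and `F_j ⊔ C = ⊤`. -/
theorem towerFactor_complement_unique
    (a : ℕ → ℕ) (ha_fin : {k : ℕ | a k ≠ 0}.Finite)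
    (ha_lt : ∀ k < 3, a k = 0)
    (j : Σ k : ℕ, Fin (a k))
    (C : Subgroup (Π k : ℕ, Π _i : Fin (a k), Equiv.Perm (Fin k))) :
    (C.Normal ∧ towerFactor a j ⊓ C = ⊥ ∧ towerFactor a j ⊔ C = ⊤) ↔
      C = ⨆ (j' : Σ k : ℕ, Fin (a k)) (_ : j' ≠ j), towerFactor a j' := by
  rw [iSup_towerFactor_eq_ker a ha_fin j]
  have hk : 3 ≤ j.1 := by
    by_contra hlt
    exact j.2.pos.ne' (ha_lt j.1 (by omega))
  constructor
  · rintro ⟨hN, hinf, hsup⟩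
    have hF := towerFactor_normal a j
    have hle : C ≤ (towerEval a j).ker := by
      intro c hc
      refine perm_eq_one_of_central hk _ fun σ => ?_
      have hcomm := Subgroup.commute_of_normal_of_disjoint (towerFactor a j) C hF hN
        (disjoint_iff.mpr hinf) (towerEmb a j σ) c ⟨σ, rfl⟩ hc
      have := congrArg (towerEval a j) hcomm.eq
      rwa [map_mul, map_mul, towerEval_emb_self] at this
    refine le_antisymm hle fun g hg => ?_
    have hg' : g ∈ towerFactor a j ⊔ C := hsup ▸ Subgroup.mem_top g
    obtain ⟨_, ⟨σ, rfl⟩, c, hc, rfl⟩ := Subgroup.mem_sup_of_normal_right.mp hg'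
    have hσ : σ = 1 := by
      rwa [MonoidHom.mem_ker, map_mul, towerEval_emb_self, MonoidHom.mem_ker.mp (hle hc),
        mul_one] at hg
    rwa [hσ, map_one, one_mul]
  · rintro rfl
    refine ⟨inferInstance, ?_, ?_⟩
    · rw [eq_bot_iff]
      rintro _ ⟨⟨σ, rfl⟩, hσ⟩
      have hσ' : σ = 1 := by
        rw [← towerEval_emb_self a j σ]
        exact hσ
      rw [hσ', map_one]
      exact one_mem _
    · rw [eq_top_iff]
      intro g _
      have hker : (towerEmb a j (towerEval a j g))⁻¹ * g ∈ (towerEval a j).ker := by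
        rw [MonoidHom.mem_ker, map_mul, map_inv, towerEval_emb_self, inv_mul_cancel]
      simpa using Subgroup.mul_mem_sup (S := towerFactor a j) ⟨towerEval a j g, rfl⟩ hker
end

section
/- Classification of coatoms via sign characters: Let G be a tower group. Every surjective monoid homomorphism f : G →* ℤˣ has the form f(g) = ∏_{j ∈ I} sign(g_j) for some finite nonempty set I ⊆ ι, where g_j denotes the coordinate of g at the slot j = (k,i) and sign is Equiv.Perm.sign. Consequently, every index-2 normal subgroup of G is the kernel of such a product-of-signs homomorphism. -/
/-! A homomorphism from a finite product to an abelian group is determined by its restrictions to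
the factors. On a factor `Equiv.Perm (Fin k)`, all transpositions are conjugate and they generate,
so a homomorphism to `ℤˣ` is either trivial or the sign (`Equiv.Perm.eq_sign_of_surjective_hom`).
Hence every homomorphism is the product of the signs over the slots where its restriction is
nontrivial (`exists_finset_eq_prod_sign`), and surjectivity makes this set of slots nonempty.
A subgroup of index two is the kernel of the homomorphism to `ℤˣ` sending its complement
to `-1`. -/

/-- A nontrivial homomorphism from a finite symmetric group to `ℤˣ` is the sign: as `ℤˣ` has only
two elements, a nontrivial homomorphism is surjective. -/
lemma eq_sign_of_ne_one {α : Type*} [Fintype α] [DecidableEq α] {s : Equiv.Perm α →* ℤˣ}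
    (hs : s ≠ 1) : s = Equiv.Perm.sign := by
  apply Equiv.Perm.eq_sign_of_surjective_hom
  obtain ⟨σ, hσ⟩ := DFunLike.ne_iff.1 hs
  intro u
  rcases Int.units_eq_one_or u with rfl | rfl
  · exact ⟨1, map_one s⟩
  · exact ⟨σ, (Int.units_eq_one_or _).resolve_left hσ⟩

/-- The classification over a single finite index type; surjectivity is not needed, the trivial
homomorphism corresponding to `I = ∅`. -/
lemma exists_finset_eq_prod_sign {ι : Type*} [Finite ι] (n : ι → ℕ)
    (f : (Π j, Equiv.Perm (Fin (n j))) →* ℤˣ) :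
    ∃ I : Finset ι, ∀ g, f g = ∏ j ∈ I, Equiv.Perm.sign (g j) := by
  classical
  have := Fintype.ofFinite ι
  let I : Finset ι := {j | f.comp (MonoidHom.mulSingle (fun j => Equiv.Perm (Fin (n j))) j) ≠ 1}
  have key : f = ∏ j ∈ I, Equiv.Perm.sign.comp (Pi.evalMonoidHom _ j) := by
    refine MonoidHom.pi_ext fun i x => ?_
    rw [MonoidHom.finsetProd_apply]
    have off : ∀ j ∈ I, j ≠ i →
        (Equiv.Perm.sign.comp (Pi.evalMonoidHom (fun j => Equiv.Perm (Fin (n j))) j))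
          (Pi.mulSingle i x) = 1 := by
      intro j _ hj
      simp [Pi.mulSingle_eq_of_ne hj]
    by_cases hi : i ∈ I
    · rw [Finset.prod_eq_single_of_mem i hi off]
      have := DFunLike.congr_fun (eq_sign_of_ne_one (Finset.mem_filter.1 hi).2) x
      simpa using this
    · rw [Finset.prod_eq_one fun j hj => off j hj fun h => hi (h ▸ hj)]
      have h1 : f.comp (MonoidHom.mulSingle (fun j => Equiv.Perm (Fin (n j))) i) = 1 := by simpa [I] using hi
      exact DFunLike.congr_fun h1 x
  refine ⟨I, fun g => ?_⟩
  conv_lhs => rw [key]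
  simp [MonoidHom.finsetProd_apply]

/-- The sign character of an index-two subgroup: `1` on the subgroup, `-1` off it. -/
noncomputable def indexTwoHom {G : Type*} [Group G] (N : Subgroup G) (hN : N.index = 2) :
    G →* ℤˣ := by
  classical
  exact
  { toFun := fun g => if g ∈ N then 1 else -1
    map_one' := by simp [N.one_mem]
    map_mul' := fun x y => by
      by_cases hx : x ∈ N <;> by_cases hy : y ∈ N <;>
        simp [Subgroup.mul_mem_iff_of_index_two hN, hx, hy] }

lemma indexTwoHom_eq_one_iff {G : Type*} [Group G] {N : Subgroup G} (hN : N.index = 2) {g : G} :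
    indexTwoHom N hN g = 1 ↔ g ∈ N := by
  by_cases hg : g ∈ N <;> simp [indexTwoHom, hg]

lemma indexTwoHom_surjective {G : Type*} [Group G] {N : Subgroup G} (hN : N.index = 2) :
    Function.Surjective (indexTwoHom N hN) := by
  have hne : N ≠ ⊤ := by
    rintro rfl
    simp at hN
  obtain ⟨x, -, hx⟩ := SetLike.exists_of_lt hne.lt_top
  intro u
  rcases Int.units_eq_one_or u with rfl | rfl
  · exact ⟨1, map_one _⟩
  · exact ⟨x, (Int.units_eq_one_or _).resolve_left (mt (indexTwoHom_eq_one_iff hN).1 hx)⟩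

/-- **Classification of coatoms via sign characters.** In a tower group
`G = ∏_{k ≥ 3} S_k^{a k}`, every surjective monoid homomorphism `f : G →* ℤˣ`
is a product of sign characters over a finite nonempty set `I` of slots, and
consequently every index-2 normal subgroup of `G` consists exactly of the
elements with trivial product of signs over such a set `I`. -/
theorem towerGroup_surjective_hom_is_sign_product
    (a : ℕ → ℕ) (ha_fin : {k : ℕ | a k ≠ 0}.Finite)
    (ha_lt : ∀ k < 3, a k = 0) :
    (∀ f : (Π k : ℕ, Π _i : Fin (a k), Equiv.Perm (Fin k)) →* ℤˣ,
      Function.Surjective f →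
        ∃ I : Finset (Σ k : ℕ, Fin (a k)), I.Nonempty ∧
          ∀ g : Π k : ℕ, Π _i : Fin (a k), Equiv.Perm (Fin k),
            f g = ∏ j ∈ I, Equiv.Perm.sign (g j.1 j.2)) ∧
    (∀ N : Subgroup (Π k : ℕ, Π _i : Fin (a k), Equiv.Perm (Fin k)),
      N.Normal → N.index = 2 →
        ∃ I : Finset (Σ k : ℕ, Fin (a k)), I.Nonempty ∧
          ∀ g : Π k : ℕ, Π _i : Fin (a k), Equiv.Perm (Fin k),
            g ∈ N ↔ ∏ j ∈ I, Equiv.Perm.sign (g j.1 j.2) = 1) := by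
  have hfin : Finite (Σ k : ℕ, Fin (a k)) := by
    have : Finite {k : ℕ | a k ≠ 0} := ha_fin
    -- Only the values of `k` in the finite support of `a` have slots above them.
    let e : (Σ k : ℕ, Fin (a k)) → Σ k : {k : ℕ | a k ≠ 0}, Fin (a k) :=
      fun j => ⟨⟨j.1, (Fin.pos j.2).ne'⟩, j.2⟩
    refine Finite.of_injective e ?_
    rintro ⟨k, i⟩ ⟨l, j⟩ h
    simp only [e, Sigma.mk.injEq, Subtype.mk.injEq] at h
    obtain ⟨rfl, h⟩ := h
    simpa using h
  have main : ∀ f : (Π k : ℕ, Π _i : Fin (a k), Equiv.Perm (Fin k)) →* ℤˣ,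
      Function.Surjective f →
        ∃ I : Finset (Σ k : ℕ, Fin (a k)), I.Nonempty ∧
          ∀ g : Π k : ℕ, Π _i : Fin (a k), Equiv.Perm (Fin k),
            f g = ∏ j ∈ I, Equiv.Perm.sign (g j.1 j.2) := by
    intro f hf
    -- Currying identifies the product over the slots with the iterated product.
    let c : (Π j : (Σ k : ℕ, Fin (a k)), Equiv.Perm (Fin j.1)) →*
        (Π k : ℕ, Π _i : Fin (a k), Equiv.Perm (Fin k)) :=
      { toFun := fun g k i => g ⟨k, i⟩
        map_one' := rfl
        map_mul' := fun _ _ => rfl }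
    obtain ⟨I, hI⟩ := exists_finset_eq_prod_sign Sigma.fst (f.comp c)
    have hI' : ∀ g, f g = ∏ j ∈ I, Equiv.Perm.sign (g j.1 j.2) :=
      fun g => hI fun j => g j.1 j.2
    refine ⟨I, ?_, hI'⟩
    rw [Finset.nonempty_iff_ne_empty]
    rintro rfl
    obtain ⟨g, hg⟩ := hf (-1)
    rw [hI' g] at hg
    simp at hg
  refine ⟨main, fun N _ hN => ?_⟩
  obtain ⟨I, hne, hI⟩ := main (indexTwoHom N hN) (indexTwoHom_surjective hN)
  exact ⟨I, hne, fun g => by rw [← hI g, indexTwoHom_eq_one_iff]⟩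
end

section
/- Goursat reconstruction of normal subgroups: Let G be a tower group and N a normal subgroup of G. Define the coupling set J(N) := {j = (k,i) ∈ ι : the image of N under the projection π_j is ⊤ and the preimage of N under the factor embedding ι_j equals alternatingGroup (Fin k)}. Then for every g ∈ G, one has g ∈ N if and only if: (i) for every j ∉ J(N), the coordinate g_j lies in the preimage of N under ι_j, and (ii) there exists n ∈ N with sign(g_j) = sign(n_j) for every j ∈ J(N). -/
/-- The projection of the tower group onto the factor at slot `j = (k, i)`. -/
def towerProj (a : ℕ → ℕ) (j : Σ k : ℕ, Fin (a k)) :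
    (Π k : ℕ, Π _i : Fin (a k), Equiv.Perm (Fin k)) →* Equiv.Perm (Fin j.1) :=
  (Pi.evalMonoidHom (fun _ : Fin (a j.1) => Equiv.Perm (Fin j.1)) j.2).comp
    (Pi.evalMonoidHom (fun k => Π _i : Fin (a k), Equiv.Perm (Fin k)) j.1)

open Equiv Equiv.Perm

theorem even_eq_commutator_three : ∀ p : Perm (Fin 3), sign p = 1 →
    ∃ q s : Perm (Fin 3), (q * p * q⁻¹) * s * (q * p * q⁻¹)⁻¹ * s⁻¹ = p := by
  decide +kernel

theorem even_eq_commutator_four : ∀ p : Perm (Fin 4), sign p = 1 →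
    ∃ q s : Perm (Fin 4), (q * p * q⁻¹) * s * (q * p * q⁻¹)⁻¹ * s⁻¹ = p := by
  decide +kernel

theorem odd_commutator_three : ∀ p : Perm (Fin 3), sign p ≠ 1 →
    ∃ s : Perm (Fin 3), (p * s * p⁻¹ * s⁻¹).support.card = 3 := by
  decide +kernel

theorem odd_commutator_four : ∀ p : Perm (Fin 4), sign p ≠ 1 →
    ∃ s : Perm (Fin 4), (p * s * p⁻¹ * s⁻¹).support.card = 3 := by
  decide +kernel

/-- All 3-cycles are conjugate in the symmetric group and generate the alternating group; this
needs no lower bound on the degree. -/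
theorem alternating_le_of_threeCycle_mem {α : Type*} [Fintype α] [DecidableEq α]
    {K : Subgroup (Perm α)} (hK : K.Normal) {c : Perm α} (hc : c.IsThreeCycle) (hcK : c ∈ K) :
    alternatingGroup α ≤ K := by
  rw [← closure_three_cycles_eq_alternating, Subgroup.closure_le]
  intro d hd
  have hconj : IsConj c d := isConj_iff_cycleType_eq.2 (hc.trans (Eq.symm hd))
  obtain ⟨q, hq⟩ := isConj_iff.1 hconj
  rw [← hq]
  exact hK.conj_mem c hcK q

/-- For `k ≥ 3` the centre of `S_k` is trivial. If `p` moves `x`, pick `y` different from `x` and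
`p x`; then `p` does not commute with the transposition of `x` and `y`. -/
theorem eq_one_of_central {k : ℕ} (hk : 3 ≤ k) {p : Perm (Fin k)}
    (hp : ∀ s : Perm (Fin k), p * s = s * p) : p = 1 := by
  by_contra hne
  obtain ⟨x, hx⟩ : ∃ x, p x ≠ x := by
    by_contra! h
    exact hne (Equiv.ext h)
  obtain ⟨y, -, hy⟩ : ∃ y ∈ (Finset.univ : Finset (Fin k)), y ∉ ({x, p x} : Finset (Fin k)) := by
    apply Finset.exists_mem_notMem_of_card_lt_card
    have := Finset.card_le_two (a := x) (b := p x)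
    rw [Finset.card_univ, Fintype.card_fin]
    omega
  simp only [Finset.mem_insert, Finset.mem_singleton, not_or] at hy
  have h := Equiv.congr_fun (hp (swap x y)) x
  rw [Perm.mul_apply, Perm.mul_apply, swap_apply_left,
    swap_apply_of_ne_of_ne hx (Ne.symm hy.2)] at h
  exact hy.1 (p.injective h)

/-- If a normal subgroup `P` is central modulo a normal subgroup `K` of `S_k`, where `k ≥ 3`, and
some `p ∈ P` lies outside `K`, then `p` is odd and `K` contains the alternating group. -/
theorem odd_and_alternating_le {k : ℕ} (hk : 3 ≤ k) {P K : Subgroup (Perm (Fin k))}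
    (hP : P.Normal) (hK : K.Normal) (hcomm : ∀ p ∈ P, ∀ s, p * s * p⁻¹ * s⁻¹ ∈ K)
    {p : Perm (Fin k)} (hp : p ∈ P) (hpK : p ∉ K) :
    sign p ≠ 1 ∧ alternatingGroup (Fin k) ≤ K := by
  by_cases h5 : 5 ≤ k
  · have hA : alternatingGroup (Fin k) ≤ K := by
      apply alternatingGroup_le_of_normal (by simpa using h5)
      by_contra hbot
      have hbot : K = ⊥ := by simpa [Subgroup.nontrivial_iff_ne_bot] using hbot
      subst hbot
      -- `p` is then central in `S_k`
      refine hpK (eq_one_of_central (by omega) fun s => ?_)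
      have h := hcomm p hp s
      rwa [Subgroup.mem_bot, mul_inv_eq_one, mul_inv_eq_iff_eq_mul] at h
    exact ⟨fun h => hpK (hA (mem_alternatingGroup.2 h)), hA⟩
  · obtain rfl | rfl : k = 3 ∨ k = 4 := by omega
    · have hodd : sign p ≠ 1 := fun h => by
        obtain ⟨q, s, hqs⟩ := even_eq_commutator_three p h
        exact hpK (hqs ▸ hcomm _ (hP.conj_mem p hp q) s)
      obtain ⟨s, hs⟩ := odd_commutator_three p hodd
      exact ⟨hodd, alternating_le_of_threeCycle_mem hK (card_support_eq_three_iff.1 hs)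
        (hcomm p hp s)⟩
    · have hodd : sign p ≠ 1 := fun h => by
        obtain ⟨q, s, hqs⟩ := even_eq_commutator_four p h
        exact hpK (hqs ▸ hcomm _ (hP.conj_mem p hp q) s)
      obtain ⟨s, hs⟩ := odd_commutator_four p hodd
      exact ⟨hodd, alternating_le_of_threeCycle_mem hK (card_support_eq_three_iff.1 hs)
        (hcomm p hp s)⟩

theorem eq_top_of_odd_mem {k : ℕ} {H : Subgroup (Perm (Fin k))}
    (hA : alternatingGroup (Fin k) ≤ H) {p : Perm (Fin k)} (hp : p ∈ H) (hodd : sign p ≠ 1) :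
    H = ⊤ := by
  rw [eq_top_iff]
  intro s _
  by_cases hs : sign s = 1
  · exact hA (mem_alternatingGroup.2 hs)
  · have h : s * p ∈ H := hA (mem_alternatingGroup.2 (by
      rw [Perm.sign_mul, (Int.units_eq_one_or _).resolve_left hs,
        (Int.units_eq_one_or _).resolve_left hodd]
      rfl))
    exact (H.mul_mem_cancel_right hp).1 h

theorem perm_dichotomy {k : ℕ} (hk : 3 ≤ k) {P K : Subgroup (Perm (Fin k))}
    (hP : P.Normal) (hK : K.Normal) (hKP : K ≤ P)
    (hcomm : ∀ p ∈ P, ∀ s, p * s * p⁻¹ * s⁻¹ ∈ K) :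
    P = K ∨ (P = ⊤ ∧ K = alternatingGroup (Fin k)) := by
  by_cases hPK : P ≤ K
  · exact Or.inl (le_antisymm hPK hKP)
  obtain ⟨p, hp, hpK⟩ := SetLike.not_le_iff_exists.1 hPK
  obtain ⟨hodd, hA⟩ := odd_and_alternating_le hk hP hK hcomm hp hpK
  refine Or.inr ⟨eq_top_of_odd_mem (hA.trans hKP) hp hodd, le_antisymm (fun x hx => ?_) hA⟩
  by_contra hxA
  -- an odd element of `K` would give `K = ⊤ ∋ p`
  exact hpK (eq_top_of_odd_mem hA hx (fun h => hxA (mem_alternatingGroup.2 h)) ▸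
    Subgroup.mem_top p)

theorem towerProj_towerEmb (a : ℕ → ℕ) (j : Σ k : ℕ, Fin (a k)) (s : Perm (Fin j.1)) :
    towerProj a j (towerEmb a j s) = s := by
  simp [towerProj, towerEmb]

theorem towerProj_surjective (a : ℕ → ℕ) (j : Σ k : ℕ, Fin (a k)) :
    Function.Surjective (towerProj a j) :=
  fun s => ⟨_, towerProj_towerEmb a j s⟩

/-- The commutator with an element supported on the slot `j` is again supported on `j`. -/
theorem commutator_towerEmb (a : ℕ → ℕ) (j : Σ k : ℕ, Fin (a k))
    (n : Π k : ℕ, Π _i : Fin (a k), Perm (Fin k)) (s : Perm (Fin j.1)) :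
    towerEmb a j (n j.1 j.2 * s * (n j.1 j.2)⁻¹ * s⁻¹) =
      n * towerEmb a j s * n⁻¹ * (towerEmb a j s)⁻¹ := by
  obtain ⟨k, i⟩ := j
  simp only [map_mul, map_inv, towerEmb, MonoidHom.comp_apply, MonoidHom.mulSingle_apply]
  funext k' i'
  by_cases hk : k' = k
  · subst hk
    by_cases hi : i' = i
    · subst hi
      simp
    · simp [hi]
  · simp [hk]

theorem map_eq_comap_or (a : ℕ → ℕ) (ha_lt : ∀ k < 3, a k = 0)
    (N : Subgroup (Π k : ℕ, Π _i : Fin (a k), Perm (Fin k))) (hN : N.Normal)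
    (j : Σ k : ℕ, Fin (a k)) :
    Subgroup.map (towerProj a j) N = Subgroup.comap (towerEmb a j) N ∨
      (Subgroup.map (towerProj a j) N = ⊤ ∧
        Subgroup.comap (towerEmb a j) N = alternatingGroup (Fin j.1)) := by
  have hk : 3 ≤ j.1 := by
    by_contra h
    have h0 := ha_lt j.1 (by omega)
    exact absurd j.2.isLt (by omega)
  refine perm_dichotomy hk (hN.map _ (towerProj_surjective a j)) (hN.comap _) ?_ ?_
  · intro s hs
    exact ⟨_, hs, towerProj_towerEmb a j s⟩
  · rintro _ ⟨n, hn, rfl⟩ s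
    change towerEmb a j (n j.1 j.2 * s * (n j.1 j.2)⁻¹ * s⁻¹) ∈ N
    rw [commutator_towerEmb, mul_assoc, mul_assoc, ← mul_assoc (towerEmb a j s)]
    exact N.mul_mem hn (hN.conj_mem _ (N.inv_mem hn) _)

theorem mem_of_coords (a : ℕ → ℕ) (ha_fin : {k : ℕ | a k ≠ 0}.Finite)
    (N : Subgroup (Π k : ℕ, Π _i : Fin (a k), Perm (Fin k)))
    (h : Π k : ℕ, Π _i : Fin (a k), Perm (Fin k))
    (hh : ∀ j : Σ k : ℕ, Fin (a k), h j.1 j.2 ∈ Subgroup.comap (towerEmb a j) N) : h ∈ N := by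
  refine Submonoid.pi_mem_of_mulSingle_mem_aux ha_fin.toFinset h (fun k hk => ?_) (fun k _ => ?_)
  · have h0 : a k = 0 := by simpa using hk
    funext i
    exact absurd i.isLt (by omega)
  · have hinner : h k ∈ N.comap
        (MonoidHom.mulSingle (fun k => Π _i : Fin (a k), Perm (Fin k)) k) :=
      Subgroup.pi_mem_of_mulSingle_mem _ (fun i => hh ⟨k, i⟩)
    exact hinner

/-- **Goursat reconstruction of normal subgroups.** Let `N` be a normal subgroup
of a tower group and let `J(N)` be the set of slots `j` where `N` projects onto
the full factor while meeting it in the alternating group. Then `g ∈ N` iff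
(i) for every slot `j ∉ J(N)` the coordinate `g_j` lies in `ι_j⁻¹(N)`, and
(ii) some `n ∈ N` matches the signs of `g` on all slots of `J(N)`. -/
theorem goursat_reconstruction
    (a : ℕ → ℕ) (ha_fin : {k : ℕ | a k ≠ 0}.Finite)
    (ha_lt : ∀ k < 3, a k = 0)
    (N : Subgroup (Π k : ℕ, Π _i : Fin (a k), Equiv.Perm (Fin k)))
    (hN : N.Normal)
    (JN : Set (Σ k : ℕ, Fin (a k)))
    (hJN : JN = {j : Σ k : ℕ, Fin (a k) |
      Subgroup.map (towerProj a j) N = ⊤ ∧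
      Subgroup.comap (towerEmb a j) N = alternatingGroup (Fin j.1)}) :
    ∀ g : Π k : ℕ, Π _i : Fin (a k), Equiv.Perm (Fin k),
      g ∈ N ↔
        ((∀ j ∉ JN, g j.1 j.2 ∈ Subgroup.comap (towerEmb a j) N) ∧
          ∃ n ∈ N, ∀ j ∈ JN,
            Equiv.Perm.sign (g j.1 j.2) = Equiv.Perm.sign (n j.1 j.2)) := by
  have hcoord : ∀ n ∈ N, ∀ j ∉ JN, n j.1 j.2 ∈ Subgroup.comap (towerEmb a j) N := by
    intro n hn j hj
    have hPK := (map_eq_comap_or a ha_lt N hN j).resolve_right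
      (fun hJ => hj (by rw [hJN]; exact hJ))
    rw [← hPK]
    exact ⟨n, hn, rfl⟩
  intro g
  refine ⟨fun hg => ⟨hcoord g hg, g, hg, fun _ _ => rfl⟩, ?_⟩
  rintro ⟨hout, n, hn, hsign⟩
  have hquot : n⁻¹ * g ∈ N := by
    refine mem_of_coords a ha_fin N _ (fun j => ?_)
    change (n j.1 j.2)⁻¹ * g j.1 j.2 ∈ _
    by_cases hj : j ∈ JN
    · have hK : Subgroup.comap (towerEmb a j) N = alternatingGroup (Fin j.1) := by
        rw [hJN] at hj
        exact hj.2
      rw [hK, mem_alternatingGroup, Perm.sign_mul, sign_inv, hsign j hj]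
      exact Int.units_mul_self _
    · exact Subgroup.mul_mem _ (Subgroup.inv_mem _ (hcoord n hn j hj)) (hout j hj)
  exact (N.mul_mem_cancel_left (N.inv_mem hn)).1 hquot
end

section
/- Decomposition into sub-products and sign-parity elements: Let G be a tower group and N a normal subgroup of G. Then there exist a family P assigning to each index j = (k,i) ∈ ι a normal subgroup P_j of Equiv.Perm (Fin k), and a finite collection I_1, …, I_ℓ of finite subsets of ι each of cardinality at least 2, such that N = {g ∈ G : g_j ∈ P_j for all j} ⊓ ⨅_{t=1}^{ℓ} D_{I_t}, where D_I := {g ∈ G : ∏_{j ∈ I} sign(g_j) = 1}. -/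
/-!
Write `Q j` for the projection of `N` to the slot `j`; it is normal in the symmetric group there.
Taking commutators of elements of `N` with elements supported at `j` shows that `N` contains, at
the slot `j`, every `⁅q, s⁆` with `q ∈ Q j`. In degree at least `3` these generate a normal subgroup
containing every *even* element of `Q j` (`even_mem_of_commutators`): in degrees `3` and `4` each
even permutation is a commutator involving one of its own conjugates, and from degree `5` on a
nontrivial normal subgroup contains the alternating group. Hence an element of `∏ Q j` with only
even coordinates lies in `N`, so an element of `∏ Q j` lies in `N` as soon as its vector of signs is
the vector of signs of some element of `N`.

The sign vectors of `N` form an `𝔽₂`-subspace, which is cut out by linear forms, i.e. by parity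
conditions `∏ j ∈ I, sign (g j) = 1` (`exists_parity_separating`). A condition with `I = ∅` is void
and one with `I = {j}` is already implied by `g j ∈ Q j`, so only those with `2 ≤ #I` matter. The
family of all such parity conditions that hold on `N` therefore does the job.
-/

section Perm

open Equiv Equiv.Perm

theorem exists_commutator_perm_three : ∀ h : Perm (Fin 3), sign h = 1 →
    ∃ u g : Perm (Fin 3), (u * h * u⁻¹) * g * (u * h * u⁻¹)⁻¹ * g⁻¹ = h := by
  decide +kernel

theorem exists_commutator_perm_four : ∀ h : Perm (Fin 4), sign h = 1 →
    ∃ u g : Perm (Fin 4), (u * h * u⁻¹) * g * (u * h * u⁻¹)⁻¹ * g⁻¹ = h := by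
  decide +kernel

/-- The center of the symmetric group of degree at least `3` is trivial. -/
theorem exists_not_commute {n : ℕ} (hn : 3 ≤ n) {q : Perm (Fin n)} (hq : q ≠ 1) :
    ∃ s : Perm (Fin n), q * s ≠ s * q := by
  obtain ⟨x, hx⟩ : ∃ x, q x ≠ x := by
    by_contra! h
    exact hq (Equiv.ext h)
  obtain ⟨z, hz⟩ : ∃ z, z ∉ ({x, q x} : Finset (Fin n)) := by
    apply Finset.exists_mem_notMem_of_card_lt_card (t := Finset.univ) _ |>.imp fun _ h => h.2
    have := Finset.card_le_two (a := x) (b := q x)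
    simp only [Finset.card_univ, Fintype.card_fin]
    omega
  simp only [Finset.mem_insert, Finset.mem_singleton, not_or] at hz
  refine ⟨swap x z, fun h => hz.1 ?_⟩
  have h1 := congrArg (fun p : Perm (Fin n) => p x) h
  simp only [Perm.mul_apply, swap_apply_left] at h1
  rw [swap_apply_of_ne_of_ne hx (Ne.symm hz.2)] at h1
  exact q.injective h1

/-- For a normal subgroup `Q` of the symmetric group of degree at least `3`, a normal subgroup `T`
containing `[Q, Sₙ]` contains all even elements of `Q`. -/
theorem even_mem_of_commutators {n : ℕ} (hn : 3 ≤ n) (Q T : Subgroup (Perm (Fin n)))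
    [hQ : Q.Normal] [T.Normal] (hT : ∀ q ∈ Q, ∀ s, q * s * q⁻¹ * s⁻¹ ∈ T)
    {h : Perm (Fin n)} (hh : h ∈ Q) (hs : sign h = 1) : h ∈ T := by
  have key (hex : ∃ u g : Perm (Fin n), (u * h * u⁻¹) * g * (u * h * u⁻¹)⁻¹ * g⁻¹ = h) :
      h ∈ T := by
    obtain ⟨u, g, e⟩ := hex
    rw [← e]
    exact hT _ (hQ.conj_mem h hh u) g
  rcases (by omega : n = 3 ∨ n = 4 ∨ 5 ≤ n) with rfl | rfl | h5
  · exact key (exists_commutator_perm_three h hs)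
  · exact key (exists_commutator_perm_four h hs)
  · by_cases h1 : h = 1
    · rw [h1]
      exact T.one_mem
    obtain ⟨s, hne⟩ := exists_not_commute hn h1
    have hnt : Nontrivial T := by
      refine (Subgroup.nontrivial_iff_exists_ne_one T).2 ⟨_, hT h hh s, fun e => hne ?_⟩
      rwa [mul_inv_eq_one, mul_inv_eq_iff_eq_mul] at e
    exact alternatingGroup_le_of_normal (by simpa using h5) hnt (mem_alternatingGroup.2 hs)

end Perm

/-- Duality for sign vectors: a subgroup of `{±1}^ι`, viewed as an `𝔽₂`-subspace, is cut out by
parity conditions. -/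
theorem exists_parity_separating {ι : Type*} [Finite ι] (K : Subgroup (ι → ℤˣ)) {v : ι → ℤˣ}
    (hv : v ∉ K) :
    ∃ I : Finset ι, (∀ w ∈ K, ∏ i ∈ I, w i = 1) ∧ ∏ i ∈ I, v i ≠ 1 := by
  classical
  have := Fintype.ofFinite ι
  let W : Submodule (ZMod 2) (ι → Additive ℤˣ) := AddSubgroup.toZModSubmodule 2
    { carrier := {w | (fun i => (w i).toMul) ∈ K}
      add_mem' := fun ha hb => K.mul_mem ha hb
      zero_mem' := K.one_mem
      neg_mem' := fun ha => K.inv_mem ha }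
  obtain ⟨f, hfv, hf⟩ := W.exists_dual_map_eq_bot_of_notMem
    (x := fun i => Additive.ofMul (v i)) hv inferInstance
  -- The identification of `{±1}` with `𝔽₂`.
  let e : Additive ℤˣ →+ ZMod 2 :=
    { toFun := fun u => if u.toMul = 1 then 0 else 1
      map_zero' := rfl
      map_add' := by
        intro a b
        rcases Int.units_eq_one_or a.toMul with ha | ha <;>
        rcases Int.units_eq_one_or b.toMul with hb | hb <;>
        simp only [toMul_add, ha, hb] <;> decide }
  have he (u : ℤˣ) : e (Additive.ofMul u) = 0 ↔ u = 1 := by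
    rcases Int.units_eq_one_or u with rfl | rfl <;> decide +revert
  -- The set where the linear form `f` has a nonzero coefficient.
  let I : Finset ι := {i | f (Pi.single i (Additive.ofMul (-1))) ≠ 0}
  have hsingle (i : ι) (u : ℤˣ) :
      f (Pi.single i (Additive.ofMul u)) = if i ∈ I then e (Additive.ofMul u) else 0 := by
    rcases Int.units_eq_one_or u with rfl | rfl
    · simp
    · have h2 : ∀ z : ZMod 2, z ≠ 0 → z = 1 := by decide
      by_cases hi : f (Pi.single i (Additive.ofMul (-1))) = 0
      · simp [I, hi]
      · rw [if_pos (by simp [I, hi]), h2 _ hi]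
        rfl
  have hI (w : ι → ℤˣ) : f (fun i => Additive.ofMul (w i)) = 0 ↔ ∏ i ∈ I, w i = 1 := by
    have hsum : f (fun i => Additive.ofMul (w i)) = e (Additive.ofMul (∏ i ∈ I, w i)) := by
      rw [← Finset.univ_sum_single (fun i => Additive.ofMul (w i)), map_sum, ofMul_prod, map_sum]
      simp only [hsingle]
      rw [Finset.sum_ite_mem, Finset.univ_inter]
    rw [hsum, he]
  refine ⟨I, fun w hw => (hI w).1 ?_, fun h => hfv ((hI v).2 h)⟩
  have hmem : f (fun i => Additive.ofMul (w i)) ∈ W.map f := Submodule.mem_map_of_mem hw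
  rwa [hf, Submodule.mem_bot] at hmem

/-- The decomposition for a product of symmetric groups over an arbitrary finite index type. -/
theorem normal_subgroup_decomposition_pi {ι : Type*} [Finite ι] (n : ι → ℕ) (hn : ∀ j, 3 ≤ n j)
    (N : Subgroup (Π j, Equiv.Perm (Fin (n j)))) [hN : N.Normal] :
    ∃ P : Π j, Subgroup (Equiv.Perm (Fin (n j))), (∀ j, (P j).Normal) ∧
      ∃ (ℓ : ℕ) (I : Fin ℓ → Finset ι), (∀ t, 2 ≤ (I t).card) ∧
        ∀ g : Π j, Equiv.Perm (Fin (n j)),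
          g ∈ N ↔ ((∀ j, g j ∈ P j) ∧ ∀ t, ∏ j ∈ I t, Equiv.Perm.sign (g j) = 1) := by
  classical
  have := Fintype.ofFinite ι
  let Q (j : ι) : Subgroup (Equiv.Perm (Fin (n j))) := N.map (Pi.evalMonoidHom _ j)
  have hQ (j : ι) : (Q j).Normal := hN.map _ (Function.surjective_eval j)
  have heven (j : ι) {h : Equiv.Perm (Fin (n j))} (hh : h ∈ Q j) (hs : Equiv.Perm.sign h = 1) :
      Pi.mulSingle j h ∈ N := by
    let T : Subgroup (Equiv.Perm (Fin (n j))) :=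
      N.comap (MonoidHom.mulSingle (fun j => Equiv.Perm (Fin (n j))) j)
    have hT : T.Normal := hN.comap _
    refine even_mem_of_commutators (hn j) (Q j) T ?_ hh hs
    rintro _ ⟨m, hm, rfl⟩ s
    have hcomm : m * (Pi.mulSingle j s * m⁻¹ * (Pi.mulSingle j s)⁻¹) ∈ N :=
      N.mul_mem hm (hN.conj_mem _ (N.inv_mem hm) _)
    have heq : Pi.mulSingle j (m j * s * (m j)⁻¹ * s⁻¹) =
        m * (Pi.mulSingle j s * m⁻¹ * (Pi.mulSingle j s)⁻¹) := by
      ext1 i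
      by_cases hi : i = j
      · subst hi
        simp [mul_assoc]
      · simp [hi]
    change Pi.mulSingle j (m j * s * (m j)⁻¹ * s⁻¹) ∈ N
    rwa [heq]
  let S : Finset (Finset ι) :=
    {I | 2 ≤ I.card ∧ ∀ m ∈ N, ∏ j ∈ I, Equiv.Perm.sign (m j) = 1}
  refine ⟨Q, hQ, S.card, fun t => (S.equivFin.symm t).1, fun t => ?_, fun g => ⟨fun hg => ?_, ?_⟩⟩
  · exact (Finset.mem_filter.1 (S.equivFin.symm t).2).2.1
  · exact ⟨fun j => ⟨g, hg, rfl⟩,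
      fun t => (Finset.mem_filter.1 (S.equivFin.symm t).2).2.2 g hg⟩
  · rintro ⟨hgQ, hgS⟩
    let σ : (Π j, Equiv.Perm (Fin (n j))) →* (ι → ℤˣ) :=
      MonoidHom.mk' (fun g j => Equiv.Perm.sign (g j)) fun a b => by ext1 j; simp
    have hσ : σ g ∈ N.map σ := by
      by_contra hnot
      obtain ⟨I, hIN, hIg⟩ := exists_parity_separating _ hnot
      have hIN' (m) (hm : m ∈ N) : ∏ j ∈ I, Equiv.Perm.sign (m j) = 1 := hIN _ ⟨m, hm, rfl⟩
      rcases (by omega : I.card = 0 ∨ I.card = 1 ∨ 2 ≤ I.card) with h0 | h1 | h2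
      · exact hIg (by simp [Finset.card_eq_zero.1 h0])
      · obtain ⟨j, rfl⟩ := Finset.card_eq_one.1 h1
        obtain ⟨m, hm, hmj⟩ := hgQ j
        have hsign := hIN' m hm
        rw [Finset.prod_singleton] at hsign hIg
        apply hIg
        change Equiv.Perm.sign (g j) = 1
        rw [← hmj]
        exact hsign
      · have hIS : I ∈ S := Finset.mem_filter.2 ⟨Finset.mem_univ _, h2, hIN'⟩
        have hgI := hgS (S.equivFin ⟨I, hIS⟩)
        simp only [Equiv.symm_apply_apply] at hgI
        exact hIg hgI
    obtain ⟨m, hm, hmg⟩ := hσ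
    have hgm : g * m⁻¹ ∈ N := by
      refine Subgroup.pi_mem_of_mulSingle_mem _ fun j => heven j ?_ ?_
      · exact (Q j).mul_mem (hgQ j) ((Q j).inv_mem ⟨m, hm, rfl⟩)
      · have hj : Equiv.Perm.sign (m j) = Equiv.Perm.sign (g j) := congrFun hmg j
        simp [hj]
    simpa using N.mul_mem hgm hm


/-- **Decomposition into sub-products and sign-parity elements.** Every normal
subgroup `N` of a tower group is the intersection of a sub-product
`{g : g_j ∈ P_j for all j}` (with each `P_j` normal) with finitely many
sign-parity subgroups `D_{I_t} = {g : ∏_{j ∈ I_t} sign(g_j) = 1}`, where each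
`I_t` has at least two elements. -/
theorem normal_subgroup_decomposition
    (a : ℕ → ℕ) (ha_fin : {k : ℕ | a k ≠ 0}.Finite)
    (ha_lt : ∀ k < 3, a k = 0)
    (N : Subgroup (Π k : ℕ, Π _i : Fin (a k), Equiv.Perm (Fin k)))
    (hN : N.Normal) :
    ∃ P : Π j : Σ k : ℕ, Fin (a k), Subgroup (Equiv.Perm (Fin j.1)),
      (∀ j, (P j).Normal) ∧
      ∃ (ℓ : ℕ) (I : Fin ℓ → Finset (Σ k : ℕ, Fin (a k))),
        (∀ t, 2 ≤ (I t).card) ∧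
        ∀ g : Π k : ℕ, Π _i : Fin (a k), Equiv.Perm (Fin k),
          g ∈ N ↔ ((∀ j : Σ k : ℕ, Fin (a k), g j.1 j.2 ∈ P j) ∧
            ∀ t, ∏ j ∈ I t, Equiv.Perm.sign (g j.1 j.2) = 1) := by
  have : Finite (Σ k : ℕ, Fin (a k)) := by
    have := ha_fin.to_subtype
    refine Finite.of_injective
      (β := Σ k : {k : ℕ | a k ≠ 0}, Fin (a k))
      (fun j => ⟨⟨j.1, (Fin.pos j.2).ne'⟩, j.2⟩) ?_
    rintro ⟨k, i⟩ ⟨k', i'⟩ h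
    simp only [Sigma.mk.injEq, Subtype.mk.injEq] at h
    obtain ⟨rfl, h⟩ := h
    simpa using h
  have h3 (j : Σ k : ℕ, Fin (a k)) : 3 ≤ j.1 := by
    by_contra! h
    have := ha_lt _ h
    have := Fin.pos j.2
    omega
  -- Currying identifies the nested product with the product over `Σ k, Fin (a k)`.
  let c : (Π j : Σ k : ℕ, Fin (a k), Equiv.Perm (Fin j.1)) →*
      (Π k : ℕ, Π _i : Fin (a k), Equiv.Perm (Fin k)) :=
    MonoidHom.mk' (fun g k i => g ⟨k, i⟩) fun _ _ => rfl
  have : (N.comap c).Normal := hN.comap c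
  obtain ⟨P, hP, ℓ, I, hI, h⟩ := normal_subgroup_decomposition_pi (fun j : Σ k : ℕ, Fin (a k) => j.1) h3
    (N.comap c)
  exact ⟨P, hP, ℓ, I, hI, fun g => h fun j => g j.1 j.2⟩
end

section
/- The group S_3^3 = Equiv.Perm (Fin 3) × Equiv.Perm (Fin 3) × Equiv.Perm (Fin 3) has exactly 38 normal subgroups: Nat.card {N : Subgroup (Equiv.Perm (Fin 3) × Equiv.Perm (Fin 3) × Equiv.Perm (Fin 3)) // N.Normal} = 38. -/
/-!
A normal subgroup `N` of `S₃³` is determined by its image `W` under the coordinatewise sign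
`S₃³ → {±1}³` and by the set `s` of coordinates on which `N` is not trivial:
`N = {x | sgn x ∈ W and x i = 1 for i ∉ s}`.
Indeed, if some `x ∈ N` has `x i ≠ 1`, then commutators of `x` with elements of the `i`-th factor
generate the alternating group of that factor (`exists_commutators`), so `N` contains it; hence any
`x` on the right-hand side differs from an element of `N` with the same signs by a product of
even permutations lying in `N`.

Conversely every subgroup `W` of `{±1}³` supported on `s` occurs, and distinct pairs `(W, s)` give
distinct subgroups. So the normal subgroups are counted by
`∑ₛ #{subgroups of {±1}ˢ} = 1 + 3 * 2 + 3 * 5 + 16 = 38`, a finite computation.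
-/

namespace S3Cubed

open Equiv.Perm

abbrev S3 := Equiv.Perm (Fin 3)

/-- The coordinatewise sign `S₃³ → {±1}³`. -/
def sgn : S3 × S3 × S3 →* ℤˣ × ℤˣ × ℤˣ :=
  sign.prodMap (sign.prodMap sign)

/-- The condition that `W` is a subgroup of `{±1}³` (closure under inverses is automatic) whose
elements are trivial at every coordinate marked `false` in `s`. -/
def IsDatum (p : Finset (ℤˣ × ℤˣ × ℤˣ) × Bool × Bool × Bool) : Prop :=
  1 ∈ p.1 ∧ (∀ a ∈ p.1, (p.2.1 = true ∨ a.1 = 1) ∧ (p.2.2.1 = true ∨ a.2.1 = 1) ∧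
    (p.2.2.2 = true ∨ a.2.2 = 1)) ∧ ∀ a ∈ p.1, ∀ b ∈ p.1, a * b ∈ p.1

set_option synthInstance.maxSize 1000 in
instance : DecidablePred IsDatum := fun p => by unfold IsDatum; infer_instance

/-- The count `∑ₛ #{subgroups of {±1}ˢ} = 1 + 3 * 2 + 3 * 5 + 16`, by enumeration. -/
theorem card_datum : Nat.card {p // IsDatum p} = 38 := by
  rw [Nat.card_eq_fintype_card]
  decide +kernel

/-- The normal subgroup `{x | sgn x ∈ W and x i = 1 for i ∉ s}`. -/
def toSubgroup (p : {p // IsDatum p}) : Subgroup (S3 × S3 × S3) where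
  carrier := {x | sgn x ∈ p.1.1 ∧ (p.1.2.1 = true ∨ x.1 = 1) ∧ (p.1.2.2.1 = true ∨ x.2.1 = 1) ∧
    (p.1.2.2.2 = true ∨ x.2.2 = 1)}
  one_mem' := ⟨by simpa using p.2.1, Or.inr rfl, Or.inr rfl, Or.inr rfl⟩
  mul_mem' := by
    rintro x y ⟨hx, h1, h2, h3⟩ ⟨hy, k1, k2, k3⟩
    refine ⟨by rw [map_mul]; exact p.2.2.2 _ hx _ hy, ?_, ?_, ?_⟩ <;>
      simp only [Prod.fst_mul, Prod.snd_mul] <;> grind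
  inv_mem' := by
    rintro x ⟨hx, h⟩
    have e : ∀ w : ℤˣ × ℤˣ × ℤˣ, w⁻¹ = w := by decide
    refine ⟨by rw [map_inv, e]; exact hx, ?_⟩
    simpa using h

theorem mem_toSubgroup (p : {p // IsDatum p}) (x : S3 × S3 × S3) :
    x ∈ toSubgroup p ↔ sgn x ∈ p.1.1 ∧ (p.1.2.1 = true ∨ x.1 = 1) ∧
      (p.1.2.2.1 = true ∨ x.2.1 = 1) ∧ (p.1.2.2.2 = true ∨ x.2.2 = 1) := Iff.rfl

theorem toSubgroup_normal (p : {p // IsDatum p}) : (toSubgroup p).Normal := by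
  refine ⟨fun x hx g => ?_⟩
  rw [mem_toSubgroup] at hx ⊢
  obtain ⟨hx, h⟩ := hx
  refine ⟨?_, ?_⟩
  · rw [map_mul, map_mul, map_inv, mul_right_comm, mul_inv_cancel, one_mul]
    exact hx
  · simpa using h

/-- For `x ≠ 1` in `S₃`, every even permutation is a product of two commutators with `x`. -/
theorem exists_commutators : ∀ x : S3, x ≠ 1 → ∀ c : S3, sign c = 1 →
    ∃ h k : S3, c = (h * x * h⁻¹ * x⁻¹) * (k * x * k⁻¹ * x⁻¹) := by
  decide +kernel

/-- Commutators with an element of a normal subgroup stay in it. -/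
theorem comm_mem {G : Type*} [Group G] {N : Subgroup G} (hN : N.Normal) {x : G} (hx : x ∈ N)
    (h k : G) : (h * x * h⁻¹ * x⁻¹) * (k * x * k⁻¹ * x⁻¹) ∈ N :=
  N.mul_mem (N.mul_mem (hN.conj_mem x hx h) (N.inv_mem hx))
    (N.mul_mem (hN.conj_mem x hx k) (N.inv_mem hx))

section

variable {N : Subgroup (S3 × S3 × S3)} (hN : N.Normal) {x : S3 × S3 × S3} (hx : x ∈ N)
  {c : S3} (hc : sign c = 1)
include hN hx hc

theorem mem_fst (h : x.1 ≠ 1) : ((c, 1, 1) : S3 × S3 × S3) ∈ N := by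
  obtain ⟨a, b, hab⟩ := exists_commutators _ h c hc
  convert comm_mem hN hx (a, 1, 1) (b, 1, 1) using 1
  ext1 <;> simp [hab, Prod.ext_iff]

theorem mem_snd (h : x.2.1 ≠ 1) : ((1, c, 1) : S3 × S3 × S3) ∈ N := by
  obtain ⟨a, b, hab⟩ := exists_commutators _ h c hc
  convert comm_mem hN hx (1, a, 1) (1, b, 1) using 1
  ext1 <;> simp [hab, Prod.ext_iff]

theorem mem_trd (h : x.2.2 ≠ 1) : ((1, 1, c) : S3 × S3 × S3) ∈ N := by
  obtain ⟨a, b, hab⟩ := exists_commutators _ h c hc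
  convert comm_mem hN hx (1, 1, a) (1, 1, b) using 1
  ext1 <;> simp [hab, Prod.ext_iff]

end

open Classical in
/-- Every normal subgroup arises from its sign image and its set of nontrivial coordinates. -/
theorem exists_datum (N : Subgroup (S3 × S3 × S3)) (hN : N.Normal) :
    ∃ p, toSubgroup p = N := by
  refine ⟨⟨(Finset.univ.filter (· ∈ N.map sgn), decide (∃ x ∈ N, x.1 ≠ 1),
    decide (∃ x ∈ N, x.2.1 ≠ 1), decide (∃ x ∈ N, x.2.2 ≠ 1)), ?_, ?_, ?_⟩, ?_⟩
  · exact Finset.mem_filter.2 ⟨Finset.mem_univ _, one_mem _⟩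
  · intro a ha
    simp only [Finset.mem_filter, Finset.mem_univ, true_and, Subgroup.mem_map] at ha
    obtain ⟨x, hx, rfl⟩ := ha
    simp only [decide_eq_true_eq]
    refine ⟨?_, ?_, ?_⟩
    · by_cases h : x.1 = 1
      · right; simp [sgn, h]
      · exact Or.inl ⟨x, hx, h⟩
    · by_cases h : x.2.1 = 1
      · right; simp [sgn, h]
      · exact Or.inl ⟨x, hx, h⟩
    · by_cases h : x.2.2 = 1
      · right; simp [sgn, h]
      · exact Or.inl ⟨x, hx, h⟩
  · intro a ha b hb
    simp only [Finset.mem_filter, Finset.mem_univ, true_and] at ha hb ⊢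
    exact mul_mem ha hb
  · ext x
    rw [mem_toSubgroup]
    simp only [Finset.mem_filter, Finset.mem_univ, true_and, decide_eq_true_eq]
    constructor
    · rintro ⟨⟨n, hn, hs⟩, h1, h2, h3⟩
      -- `d` has trivial signs, and `d i = 1` whenever `N` is trivial at `i`.
      obtain ⟨d, rfl⟩ : ∃ d, x = d * n := ⟨x * n⁻¹, by simp⟩
      have hd : sgn d = 1 := by simpa using hs.symm
      obtain ⟨d1, d2, d3⟩ := d
      obtain ⟨n1, n2, n3⟩ := n
      simp only [sgn, MonoidHom.coe_prodMap, Prod.map_apply, Prod.mk_eq_one] at hd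
      obtain ⟨e1, e2, e3⟩ := hd
      have m1 : ((d1, 1, 1) : S3 × S3 × S3) ∈ N := by
        by_cases h : ∃ x ∈ N, x.1 ≠ 1
        · obtain ⟨y, hy, hy'⟩ := h
          exact mem_fst hN hy e1 hy'
        · have hd1 := h1.resolve_left h
          push Not at h
          have := h _ hn
          have hone : ((1, 1, 1) : S3 × S3 × S3) ∈ N := N.one_mem
          simp_all
      have m2 : ((1, d2, 1) : S3 × S3 × S3) ∈ N := by
        by_cases h : ∃ x ∈ N, x.2.1 ≠ 1
        · obtain ⟨y, hy, hy'⟩ := h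
          exact mem_snd hN hy e2 hy'
        · have hd1 := h2.resolve_left h
          push Not at h
          have := h _ hn
          have hone : ((1, 1, 1) : S3 × S3 × S3) ∈ N := N.one_mem
          simp_all
      have m3 : ((1, 1, d3) : S3 × S3 × S3) ∈ N := by
        by_cases h : ∃ x ∈ N, x.2.2 ≠ 1
        · obtain ⟨y, hy, hy'⟩ := h
          exact mem_trd hN hy e3 hy'
        · have hd1 := h3.resolve_left h
          push Not at h
          have := h _ hn
          have hone : ((1, 1, 1) : S3 × S3 × S3) ∈ N := N.one_mem
          simp_all
      refine N.mul_mem ?_ hn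
      simpa using N.mul_mem m1 (N.mul_mem m2 m3)
    · intro hx
      refine ⟨⟨x, hx, rfl⟩, ?_, ?_, ?_⟩
      · exact or_iff_not_imp_right.2 fun h => ⟨x, hx, h⟩
      · exact or_iff_not_imp_right.2 fun h => ⟨x, hx, h⟩
      · exact or_iff_not_imp_right.2 fun h => ⟨x, hx, h⟩

/-- A set-theoretic section of the sign map that sends `1` to `1`. -/
def lift (u : ℤˣ) : S3 := if u = 1 then 1 else Equiv.swap 0 1

theorem sign_lift : ∀ u, sign (lift u) = u := by decide +kernel

theorem lift_one : lift 1 = 1 := rfl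

/-- `W` is the image of the associated subgroup under `sgn`. -/
theorem mem_fst_iff (p : {p // IsDatum p}) (w : ℤˣ × ℤˣ × ℤˣ) :
    w ∈ p.1.1 ↔ ∃ x ∈ toSubgroup p, sgn x = w := by
  constructor
  · intro hw
    have hs : sgn (lift w.1, lift w.2.1, lift w.2.2) = w := by simp [sgn, sign_lift]
    refine ⟨_, ?_, hs⟩
    rw [mem_toSubgroup, hs]
    obtain ⟨h1, h2, h3⟩ := p.2.2.1 w hw
    exact ⟨hw, h1.imp_right fun h => by simp [h, lift_one],
      h2.imp_right fun h => by simp [h, lift_one], h3.imp_right fun h => by simp [h, lift_one]⟩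
  · rintro ⟨x, hx, rfl⟩
    exact hx.1

theorem finRotate_props : sign (finRotate 3) = 1 ∧ finRotate 3 ≠ 1 := by decide +kernel

/-! The marked coordinates are those at which the associated subgroup contains a 3-cycle. -/

theorem mark_fst (p : {p // IsDatum p}) :
    p.1.2.1 = true ↔ (finRotate 3, 1, 1) ∈ toSubgroup p := by
  have h : sgn (finRotate 3, 1, 1) = 1 := by simp [sgn, finRotate_props.1]
  simp [mem_toSubgroup, h, p.2.1, finRotate_props.2]

theorem mark_snd (p : {p // IsDatum p}) :
    p.1.2.2.1 = true ↔ (1, finRotate 3, 1) ∈ toSubgroup p := by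
  have h : sgn (1, finRotate 3, 1) = 1 := by simp [sgn, finRotate_props.1]
  simp [mem_toSubgroup, h, p.2.1, finRotate_props.2]

theorem mark_trd (p : {p // IsDatum p}) :
    p.1.2.2.2 = true ↔ (1, 1, finRotate 3) ∈ toSubgroup p := by
  have h : sgn (1, 1, finRotate 3) = 1 := by simp [sgn, finRotate_props.1]
  simp [mem_toSubgroup, h, p.2.1, finRotate_props.2]

theorem toSubgroup_injective : Function.Injective toSubgroup := by
  intro p q h
  refine Subtype.ext (Prod.ext ?_ (Prod.ext ?_ (Prod.ext ?_ ?_)))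
  · ext1 w
    rw [mem_fst_iff, mem_fst_iff, h]
  · rw [Bool.eq_iff_iff, mark_fst, mark_fst, h]
  · rw [Bool.eq_iff_iff, mark_snd, mark_snd, h]
  · rw [Bool.eq_iff_iff, mark_trd, mark_trd, h]

end S3Cubed

/-- The group `S₃³` has exactly 38 normal subgroups. -/
theorem card_normalSubgroups_s3_cubed :
    Nat.card {N : Subgroup (Equiv.Perm (Fin 3) × Equiv.Perm (Fin 3) ×
        Equiv.Perm (Fin 3)) // N.Normal} = 38 := by
  rw [← S3Cubed.card_datum]
  symm
  refine Nat.card_eq_of_bijective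
    (fun p => ⟨S3Cubed.toSubgroup p, S3Cubed.toSubgroup_normal p⟩) ⟨?_, ?_⟩
  · intro p q h
    exact S3Cubed.toSubgroup_injective (congrArg Subtype.val h)
  · rintro ⟨N, hN⟩
    obtain ⟨p, hp⟩ := S3Cubed.exists_datum N hN
    exact ⟨p, Subtype.ext hp⟩
end
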